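/- arXiv:1904.06942 — 3 statements merged into one kernel-verified Lean document; each statement's English description precedes it below -/
import Mathlib

section
/- For every MSO sentence φ over Σ-labeled undirected graphs, there exists an MSO sentence φ~ over binary trees labeled by Σ ∪ {⊕,⊗} such that for every cograph term C, denoting G = ⟦C⟧: G ⊨ φ if and only if C ⊨ φ~. -/
/-! ### Monadic second-order logic over vertex- and edge-labeled structures -/

/-- MSO formulas over structures with vertex labels `Vl` and binary relations
indexed by `El`.  First-order variables and set variables are indexed by `ℕ`. -/
inductive GMSO (Vl El : Type) : Type
  | lab (a : Vl) (x : ℕ)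
  | edge (γ : El) (x y : ℕ)
  | eq (x y : ℕ)
  | mem (x X : ℕ)
  | or (φ ψ : GMSO Vl El)
  | not (φ : GMSO Vl El)
  | exFO (x : ℕ) (φ : GMSO Vl El)
  | exSO (X : ℕ) (φ : GMSO Vl El)

namespace GMSO

variable {Vl El : Type} {V : Type}

/-- Satisfaction of an MSO formula in a structure with domain `dom`, labeling
relation `lab` and edge relations `edge`, under valuations `ν` (first-order,
partial) and `μ` (second-order). -/
def Sat (dom : Set V) (lab : V → Vl → Prop) (edge : El → V → V → Prop) :
    (ℕ → Option V) → (ℕ → Set V) → GMSO Vl El → Prop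
  | ν, _, .lab a x => ∃ v, ν x = some v ∧ v ∈ dom ∧ lab v a
  | ν, _, .edge γ x y => ∃ u v, ν x = some u ∧ ν y = some v ∧ edge γ u v
  | ν, _, .eq x y => ∃ v, ν x = some v ∧ ν y = some v
  | ν, μ, .mem x X => ∃ v, ν x = some v ∧ v ∈ μ X
  | ν, μ, .or φ ψ => Sat dom lab edge ν μ φ ∨ Sat dom lab edge ν μ ψ
  | ν, μ, .not φ => ¬ Sat dom lab edge ν μ φ
  | ν, μ, .exFO x φ => ∃ v ∈ dom, Sat dom lab edge (Function.update ν x (some v)) μ φ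
  | ν, μ, .exSO X φ => ∃ E : Set V, E ⊆ dom ∧ Sat dom lab edge ν (Function.update μ X E) φ

/-- Free first-order variables. -/
def freeFO : GMSO Vl El → Set ℕ
  | .lab _ x => {x}
  | .edge _ x y => {x, y}
  | .eq x y => {x, y}
  | .mem x _ => {x}
  | .or φ ψ => freeFO φ ∪ freeFO ψ
  | .not φ => freeFO φ
  | .exFO x φ => freeFO φ \ {x}
  | .exSO _ φ => freeFO φ

/-- Free second-order variables. -/
def freeSO : GMSO Vl El → Set ℕ
  | .lab _ _ => ∅
  | .edge _ _ _ => ∅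
  | .eq _ _ => ∅
  | .mem _ X => {X}
  | .or φ ψ => freeSO φ ∪ freeSO ψ
  | .not φ => freeSO φ
  | .exFO _ φ => freeSO φ
  | .exSO X φ => freeSO φ \ {X}

/-- A sentence is a formula without free variables. -/
def Closed (φ : GMSO Vl El) : Prop := freeFO φ = ∅ ∧ freeSO φ = ∅

/-- Satisfaction of a sentence (valuations are irrelevant for sentences). -/
def Models (dom : Set V) (lab : V → Vl → Prop) (edge : El → V → V → Prop)
    (φ : GMSO Vl El) : Prop :=
  Sat dom lab edge (fun _ => none) (fun _ => ∅) φ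

/-- First-order formulas: no second-order quantification. -/
def FirstOrder : GMSO Vl El → Prop
  | .or φ ψ => FirstOrder φ ∧ FirstOrder ψ
  | .not φ => FirstOrder φ
  | .exFO _ φ => FirstOrder φ
  | .exSO _ _ => False
  | _ => True

/-- EMSO formulas: a block of existential second-order quantifiers followed by a
first-order formula. -/
inductive IsEMSO : GMSO Vl El → Prop
  | fo {φ : GMSO Vl El} : FirstOrder φ → IsEMSO φ
  | ex {X : ℕ} {φ : GMSO Vl El} : IsEMSO φ → IsEMSO (.exSO X φ)

end GMSO
/-! ### Labeled binary trees (with unary nodes) and MSO over them -/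

/-- Λ-labeled trees in which every node has 0, 1, or 2 children. -/
inductive BTree (Λ : Type) : Type
  | leaf (l : Λ)
  | unary (l : Λ) (t : BTree Λ)
  | binary (l : Λ) (t₁ t₂ : BTree Λ)

namespace BTree

variable {Λ : Type}

/-- The label at a position (a path from the root; `false` = child 0,
`true` = child 1), if the position exists. -/
def labelAt : BTree Λ → List Bool → Option Λ
  | .leaf l, [] => some l
  | .unary l _, [] => some l
  | .binary l _ _, [] => some l
  | .unary _ t, false :: p => t.labelAt p
  | .binary _ t₁ _, false :: p => t₁.labelAt p
  | .binary _ _ t₂, true :: p => t₂.labelAt p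
  | _, _ => none

/-- The set of node positions of a tree. -/
def positions (t : BTree Λ) : Set (List Bool) := {p | (t.labelAt p).isSome}

/-- The `b`-child relation (`b = false`: child 0, `b = true`: child 1). -/
def childRel (t : BTree Λ) (b : Bool) (p q : List Bool) : Prop :=
  q = p ++ [b] ∧ q ∈ t.positions

/-- Satisfaction of an MSO sentence over the tree (atoms: labels, `↓0`, `↓1`). -/
def TSat (t : BTree Λ) (φ : GMSO Λ Bool) : Prop :=
  GMSO.Models t.positions (fun p l => t.labelAt p = some l) t.childRel φ

end BTree
/-! ### Cograph terms and their graph semantics -/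

/-- The label alphabet of cograph terms: letters of the alphabet, `⊕`
(`Sum.inr false`) and `⊗` (`Sum.inr true`). -/
abbrev CographLabel (Alph : Type) : Type := Alph ⊕ Bool

/-- A binary tree is a cograph term iff every leaf carries a letter and every
non-leaf node is binary and carries `⊕` or `⊗`. -/
def IsCographTerm {Alph : Type} : BTree (CographLabel Alph) → Prop
  | .leaf (Sum.inl _) => True
  | .binary (Sum.inr _) t₁ t₂ => IsCographTerm t₁ ∧ IsCographTerm t₂
  | _ => False

/-- The vertices of the cograph `⟦C⟧`: the (letter-labeled) leaf positions. -/
def cographVertices {Alph : Type} (t : BTree (CographLabel Alph)) : Set (List Bool) :=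
  {p | ∃ a : Alph, t.labelAt p = some (Sum.inl a)}

/-- The edges of the cograph `⟦C⟧`, defined compositionally: `⊕` is disjoint
union and `⊗` is the complete join. -/
def cographEdge {Alph : Type} :
    BTree (CographLabel Alph) → List Bool → List Bool → Prop
  | .binary l t₁ t₂, u, v =>
      (∃ u' v', u = false :: u' ∧ v = false :: v' ∧ cographEdge t₁ u' v') ∨
      (∃ u' v', u = true :: u' ∧ v = true :: v' ∧ cographEdge t₂ u' v') ∨
      (l = Sum.inr true ∧
        ((∃ u' v', u = false :: u' ∧ v = true :: v' ∧
            u' ∈ cographVertices t₁ ∧ v' ∈ cographVertices t₂) ∨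
         (∃ u' v', u = true :: u' ∧ v = false :: v' ∧
            u' ∈ cographVertices t₂ ∧ v' ∈ cographVertices t₁)))
  | _, _, _ => False

/-- Satisfaction of a graph-MSO sentence (single, undirected edge relation) in
the cograph `⟦C⟧` denoted by the term `C = t`. -/
def cographSat {Alph : Type} (t : BTree (CographLabel Alph))
    (φ : GMSO Alph Unit) : Prop :=
  GMSO.Models (cographVertices t) (fun p a => t.labelAt p = some (Sum.inl a))
    (fun _ u v => cographEdge t u v) φ

namespace CographAux

open GMSO

variable {Vl El V : Type}

def fAnd (a b : GMSO Vl El) : GMSO Vl El := .not (.or (.not a) (.not b))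

theorem sat_fAnd (dom : Set V) (lab : V → Vl → Prop) (edge : El → V → V → Prop) (ν μ)
    (a b : GMSO Vl El) :
    Sat dom lab edge ν μ (fAnd a b) ↔ Sat dom lab edge ν μ a ∧ Sat dom lab edge ν μ b := by
  simp only [fAnd, Sat]; tauto

def fClosed : GMSO Vl Bool :=
  .not (.exFO 0 (.exFO 1 (fAnd (.or (.edge false 0 1) (.edge true 0 1))
    (fAnd (.mem 0 0) (.not (.mem 1 0))))))

def fLe (z x : ℕ) : GMSO Vl Bool :=
  .not (.exSO 0 (fAnd (.mem z 0) (fAnd fClosed (.not (.mem x 0)))))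

def fVert {Alph : Type} (x : ℕ) : GMSO (CographLabel Alph) Bool :=
  fAnd (.not (.lab (Sum.inr false) x)) (.not (.lab (Sum.inr true) x))

def fEdge {Alph : Type} (x y : ℕ) : GMSO (CographLabel Alph) Bool :=
  fAnd (fAnd (.eq x x) (.eq y y))
   (.exFO (x+y+1) (.exFO (x+y+2) (.exFO (x+y+3)
    (fAnd (.lab (Sum.inr true) (x+y+1))
    (fAnd (fAnd (.edge false (x+y+1) (x+y+2)) (.edge true (x+y+1) (x+y+3)))
      (.or (fAnd (fLe (x+y+2) x) (fLe (x+y+3) y))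
           (fAnd (fLe (x+y+2) y) (fLe (x+y+3) x))))))))

def tr {Alph : Type} : GMSO Alph Unit → GMSO (CographLabel Alph) Bool
  | .lab a x => .lab (Sum.inl a) x
  | .edge _ x y => fEdge x y
  | .eq x y => .eq x y
  | .mem x X => .mem x X
  | .or φ ψ => .or (tr φ) (tr ψ)
  | .not φ => .not (tr φ)
  | .exFO x φ => .exFO x (fAnd (fVert x) (tr φ))
  | .exSO X φ => .exSO X (fAnd (.not (.exFO 0 (fAnd (.mem 0 X) (.not (fVert 0))))) (tr φ))

theorem tr_freeFO {Alph : Type} (φ : GMSO Alph Unit) : freeFO (tr φ) ⊆ freeFO φ := by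
  induction φ with
  | lab a x => simp [tr, freeFO]
  | edge g x y =>
    intro n
    simp only [tr, freeFO, fEdge, fAnd, fLe, fClosed, Set.mem_union, Set.mem_sdiff,
      Set.mem_insert_iff, Set.mem_singleton_iff]
    omega
  | eq x y => simp [tr, freeFO]
  | mem x X => simp [tr, freeFO]
  | or a b iha ihb => exact Set.union_subset_union iha ihb
  | not a ih => exact ih
  | exFO x a ih =>
    intro n
    have := @ih n
    simp only [tr, freeFO, fAnd, fVert, Set.mem_union, Set.mem_sdiff,
      Set.mem_insert_iff, Set.mem_singleton_iff]
    tauto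
  | exSO X a ih =>
    intro n
    have := @ih n
    simp only [tr, freeFO, fAnd, fVert, Set.mem_union, Set.mem_sdiff,
      Set.mem_insert_iff, Set.mem_singleton_iff]
    tauto

theorem tr_freeSO {Alph : Type} (φ : GMSO Alph Unit) : freeSO (tr φ) ⊆ freeSO φ := by
  induction φ with
  | lab a x => simp [tr, freeSO]
  | edge g x y =>
    intro n
    simp only [tr, freeSO, fEdge, fAnd, fLe, fClosed, Set.mem_union, Set.mem_sdiff,
      Set.mem_insert_iff, Set.mem_singleton_iff, Set.mem_empty_iff_false]
    tauto
  | eq x y => simp [tr, freeSO]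
  | mem x X => simp [tr, freeSO]
  | or a b iha ihb => exact Set.union_subset_union iha ihb
  | not a ih => exact ih
  | exFO x a ih =>
    intro n
    have := @ih n
    simp only [tr, freeSO, fAnd, fVert, Set.mem_union, Set.mem_sdiff,
      Set.mem_insert_iff, Set.mem_singleton_iff, Set.mem_empty_iff_false]
    tauto
  | exSO X a ih =>
    intro n
    have := @ih n
    simp only [tr, freeSO, fAnd, fVert, Set.mem_union, Set.mem_sdiff,
      Set.mem_insert_iff, Set.mem_singleton_iff, Set.mem_empty_iff_false]
    tauto

theorem pos_prefix {Λ : Type} (t : BTree Λ) (p s : List Bool) (h : p ++ s ∈ t.positions) :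
    p ∈ t.positions := by
  induction p generalizing t with
  | nil => cases t <;> simp [BTree.positions, BTree.labelAt]
  | cons b p ih =>
    cases t <;> cases b <;>
      simp only [BTree.positions, Set.mem_ofPred_eq, List.cons_append, BTree.labelAt] at h ⊢
    all_goals first | exact h | exact ih _ h

theorem le_iff {Λ : Type} (t : BTree Λ) (p u : List Bool) (hp : p ∈ t.positions)
    (hu : u ∈ t.positions) :
    (∀ E : Set (List Bool), E ⊆ t.positions → p ∈ E →
      (∀ a b, a ∈ E → a ++ [b] ∈ t.positions → a ++ [b] ∈ E) → u ∈ E) ↔ p <+: u := by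
  constructor
  · intro h
    refine (h {q | q ∈ t.positions ∧ p <+: q} (fun q hq => hq.1) ⟨hp, List.prefix_refl _⟩ ?_).2
    rintro a b ⟨_, h1⟩ h2
    exact ⟨h2, h1.trans (List.prefix_append _ _)⟩
  · rintro ⟨s, rfl⟩ E _ hpE hc
    induction s using List.reverseRecOn with
    | nil => simpa using hpE
    | append_singleton s b ih =>
      rw [← List.append_assoc] at hu ⊢
      exact hc _ _ (ih (pos_prefix t _ _ hu)) hu

abbrev TS {Λ : Type} (t : BTree Λ) (ν : ℕ → Option (List Bool))
    (μ : ℕ → Set (List Bool)) (φ : GMSO Λ Bool) : Prop :=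
  Sat t.positions (fun p l => t.labelAt p = some l) t.childRel ν μ φ

theorem sat_closed {Λ : Type} (t : BTree Λ) (ν : ℕ → Option (List Bool))
    (μ : ℕ → Set (List Bool)) (hμ : μ 0 ⊆ t.positions) :
    TS t ν μ fClosed ↔ ∀ a b, a ∈ μ 0 → a ++ [b] ∈ t.positions → a ++ [b] ∈ μ 0 := by
  unfold TS fClosed
  simp only [sat_fAnd, Sat]
  constructor
  · intro h a b ha hb
    by_contra hn
    refine h ⟨a, hμ ha, a ++ [b], hb, ?_, ?_, ?_⟩
    · cases b
      · left; exact ⟨a, _, by simp, by simp, rfl, hb⟩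
      · right; exact ⟨a, _, by simp, by simp, rfl, hb⟩
    · exact ⟨a, by simp, ha⟩
    · simpa using hn
  · rintro h ⟨a, ha, c, hc, he, h1, h2⟩
    have h1' : a ∈ μ 0 := by simpa using h1
    have h2' : c ∉ μ 0 := by simpa using h2
    rcases he with ⟨u, v, hu, hv, rfl, hh⟩ | ⟨u, v, hu, hv, rfl, hh⟩
    all_goals
      simp at hu hv
      subst hu
      subst hv
      exact h2' (h _ _ h1' hc)

theorem sat_le {Λ : Type} (t : BTree Λ) (ν : ℕ → Option (List Bool))
    (μ : ℕ → Set (List Bool)) (z x : ℕ) (p u : List Bool) (hz : ν z = some p) (hx : ν x = some u)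
    (hp : p ∈ t.positions) (hu : u ∈ t.positions) :
    TS t ν μ (fLe z x) ↔ p <+: u := by
  rw [← le_iff t p u hp hu]
  unfold TS fLe
  simp only [Sat, sat_fAnd]
  push Not
  apply forall_congr'
  intro E
  refine imp_congr_right fun hE => ?_
  have := sat_closed t ν (Function.update μ 0 E) (by simpa using hE)
  unfold TS at this
  rw [this]
  simp [hz, hx]

theorem sat_vert {Alph : Type} (t : BTree (CographLabel Alph)) (ν : ℕ → Option (List Bool))
    (μ : ℕ → Set (List Bool)) (x : ℕ) (u : List Bool) (hx : ν x = some u)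
    (hu : u ∈ t.positions) :
    TS t ν μ (fVert x) ↔ u ∈ cographVertices t := by
  unfold TS fVert
  simp only [Sat, sat_fAnd, hx, cographVertices, Set.mem_ofPred_eq]
  have hu' := hu
  obtain ⟨l, hl⟩ := Option.isSome_iff_exists.1 hu'
  rcases l with a | b
  · simp [hl]
  · cases b <;> simp [hl, hu]

theorem vert_pos {Alph : Type} (t : BTree (CographLabel Alph)) {u : List Bool}
    (h : u ∈ cographVertices t) : u ∈ t.positions := by
  obtain ⟨a, h⟩ := h
  simp [BTree.positions, h]

def EP {Alph : Type} (t : BTree (CographLabel Alph)) (u v : List Bool) : Prop :=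
  ∃ p, t.labelAt p = some (Sum.inr true) ∧ u ∈ cographVertices t ∧ v ∈ cographVertices t ∧
    ((p ++ [false] <+: u ∧ p ++ [true] <+: v) ∨ (p ++ [false] <+: v ∧ p ++ [true] <+: u))

theorem edge_iff {Alph : Type} (t : BTree (CographLabel Alph)) (ht : IsCographTerm t)
    (u v : List Bool) : cographEdge t u v ↔ EP t u v := by
  induction t generalizing u v with
  | leaf l =>
    simp only [cographEdge, false_iff]
    rintro ⟨p, hp, _⟩
    rcases l with a | b
    · rcases p with _ | ⟨_ | _, p⟩ <;> simp [BTree.labelAt] at hp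
    · simp [IsCographTerm] at ht
  | unary l t ih => simp [IsCographTerm] at ht
  | binary l t₁ t₂ ih1 ih2 =>
    rcases l with a | b
    · simp [IsCographTerm] at ht
    simp only [IsCographTerm] at ht
    have ih1 := ih1 ht.1
    have ih2 := ih2 ht.2
    simp only [cographEdge, ih1, ih2]
    constructor
    · rintro (⟨u, v, rfl, rfl, p, hp, hu, hv, h⟩ | ⟨u, v, rfl, rfl, p, hp, hu, hv, h⟩ |
        ⟨hl, ⟨u, v, rfl, rfl, hu, hv⟩ | ⟨u, v, rfl, rfl, hu, hv⟩⟩)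
      · exact ⟨false :: p, by simpa [BTree.labelAt] using hp, hu, hv, by simpa using h⟩
      · exact ⟨true :: p, by simpa [BTree.labelAt] using hp, hu, hv, by simpa using h⟩
      · exact ⟨[], by simpa [BTree.labelAt] using hl, hu, hv, by simp⟩
      · exact ⟨[], by simpa [BTree.labelAt] using hl, hu, hv, by simp⟩
    · rintro ⟨p, hp, hu, hv, h⟩
      rcases p with _ | ⟨c, p⟩
      · right; right
        refine ⟨by simpa [BTree.labelAt] using hp, ?_⟩
        rcases h with ⟨⟨u, rfl⟩, ⟨v, rfl⟩⟩ | ⟨⟨v, rfl⟩, ⟨u, rfl⟩⟩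
        · left; exact ⟨u, v, rfl, rfl, hu, hv⟩
        · right; exact ⟨u, v, rfl, rfl, hu, hv⟩
      · have hu' : ∃ u', u = c :: u' := by
          rcases h with ⟨⟨u, rfl⟩, _⟩ | ⟨_, ⟨u, rfl⟩⟩ <;> exact ⟨_, rfl⟩
        have hv' : ∃ u', v = c :: u' := by
          rcases h with ⟨_, ⟨u, rfl⟩⟩ | ⟨⟨u, rfl⟩, _⟩ <;> exact ⟨_, rfl⟩
        obtain ⟨u, rfl⟩ := hu'
        obtain ⟨v, rfl⟩ := hv'
        simp only [List.cons_append, List.cons_prefix_cons, true_and] at h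
        cases c
        · left; exact ⟨u, v, rfl, rfl, p, hp, hu, hv, h⟩
        · right; left; exact ⟨u, v, rfl, rfl, p, hp, hu, hv, h⟩

theorem sat_edge {Alph : Type} (t : BTree (CographLabel Alph)) (ν : ℕ → Option (List Bool))
    (μ : ℕ → Set (List Bool)) (x y : ℕ) (u v : List Bool) (hx : ν x = some u) (hy : ν y = some v)
    (hu : u ∈ cographVertices t) (hv : v ∈ cographVertices t) :
    TS t ν μ (fEdge x y) ↔ EP t u v := by
  have hup := vert_pos t hu
  have hvp := vert_pos t hv
  have key : ∀ p q r, q ∈ t.positions → r ∈ t.positions →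
      (TS t (Function.update (Function.update (Function.update ν (x+y+1) (some p))
        (x+y+2) (some q)) (x+y+3) (some r)) μ
        (.or (fAnd (fLe (x+y+2) x) (fLe (x+y+3) y))
           (fAnd (fLe (x+y+2) y) (fLe (x+y+3) x))) ↔
        ((q <+: u ∧ r <+: v) ∨ (q <+: v ∧ r <+: u))) := by
    intro p q r hq hr
    set ν' := Function.update (Function.update (Function.update ν (x+y+1) (some p))
        (x+y+2) (some q)) (x+y+3) (some r) with hν
    have e1 : ν' x = some u := by
      simp only [hν, Function.update_apply]
      rw [if_neg (by omega), if_neg (by omega), if_neg (by omega), hx]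
    have e2 : ν' y = some v := by
      simp only [hν, Function.update_apply]
      rw [if_neg (by omega), if_neg (by omega), if_neg (by omega), hy]
    have e3 : ν' (x+y+2) = some q := by simp [hν, Function.update_apply]
    have e4 : ν' (x+y+3) = some r := by simp [hν]
    have a1 := sat_le t ν' μ _ _ _ _ e3 e1 hq hup
    have a2 := sat_le t ν' μ _ _ _ _ e4 e2 hr hvp
    have a3 := sat_le t ν' μ _ _ _ _ e3 e2 hq hvp
    have a4 := sat_le t ν' μ _ _ _ _ e4 e1 hr hup
    unfold TS at *
    rw [Sat, sat_fAnd, sat_fAnd, a1, a2, a3, a4]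
  unfold fEdge TS
  rw [sat_fAnd, sat_fAnd]
  constructor
  · rintro ⟨-, p, hp, q, hq, r, hr, h⟩
    rw [sat_fAnd, sat_fAnd, sat_fAnd] at h
    obtain ⟨h1, ⟨h2, h3⟩, h4⟩ := h
    have h4 := (key p q r hq hr).1 h4
    simp only [Sat, Function.update_apply] at h1 h2 h3
    simp at h1 h2 h3
    obtain ⟨rfl, -⟩ := h2
    obtain ⟨rfl, -⟩ := h3
    exact ⟨p, h1.2, hu, hv, h4⟩
  · rintro ⟨p, hp, -, -, h⟩
    have hq : p ++ [false] ∈ t.positions := by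
      rcases h with ⟨⟨s, rfl⟩, _⟩ | ⟨⟨s, rfl⟩, _⟩
      · exact pos_prefix t _ _ hup
      · exact pos_prefix t _ _ hvp
    have hr : p ++ [true] ∈ t.positions := by
      rcases h with ⟨_, ⟨s, rfl⟩⟩ | ⟨_, ⟨s, rfl⟩⟩
      · exact pos_prefix t _ _ hvp
      · exact pos_prefix t _ _ hup
    have hpp := pos_prefix t _ _ hq
    refine ⟨⟨⟨u, hx, hx⟩, ⟨v, hy, hy⟩⟩, p, hpp, _, hq, _, hr, ?_⟩
    rw [sat_fAnd, sat_fAnd, sat_fAnd]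
    refine ⟨?_, ⟨?_, ?_⟩, (key p _ _ hq hr).2 h⟩
    · exact ⟨p, by simp [Function.update_apply], hpp, hp⟩
    · exact ⟨p, _, by simp [Function.update_apply], by simp [Function.update_apply], rfl, hq⟩
    · exact ⟨p, _, by simp [Function.update_apply], by simp [Function.update_apply], rfl, hr⟩

theorem main {Alph : Type} (t : BTree (CographLabel Alph)) (ht : IsCographTerm t)
    (φ : GMSO Alph Unit) (ν : ℕ → Option (List Bool)) (μ : ℕ → Set (List Bool))
    (hν : ∀ x u, ν x = some u → u ∈ cographVertices t) :
    Sat (cographVertices t) (fun p a => t.labelAt p = some (Sum.inl a))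
      (fun _ u v => cographEdge t u v) ν μ φ ↔ TS t ν μ (tr φ) := by
  induction φ generalizing ν μ with
  | lab a x =>
    simp only [TS, tr, Sat]
    constructor
    · rintro ⟨v, h1, h2, h3⟩
      exact ⟨v, h1, vert_pos t h2, h3⟩
    · rintro ⟨v, h1, h2, h3⟩
      exact ⟨v, h1, hν _ _ h1, h3⟩
  | edge g x y =>
    constructor
    · rintro ⟨u, v, h1, h2, h3⟩
      exact (sat_edge t ν μ x y u v h1 h2 (hν _ _ h1) (hν _ _ h2)).2 ((edge_iff t ht u v).1 h3)
    · intro h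
      have h' := h
      simp only [TS, tr, fEdge] at h'
      rw [sat_fAnd, sat_fAnd] at h'
      obtain ⟨⟨⟨u, h1, -⟩, ⟨v, h2, -⟩⟩, -⟩ := h'
      exact ⟨u, v, h1, h2, (edge_iff t ht u v).2
        ((sat_edge t ν μ x y u v h1 h2 (hν _ _ h1) (hν _ _ h2)).1 h)⟩
  | eq x y => rfl
  | mem x X => rfl
  | or a b iha ihb => exact or_congr (iha ν μ hν) (ihb ν μ hν)
  | not a ih => exact not_congr (ih ν μ hν)
  | exFO x a ih =>
    have hup : ∀ v ∈ cographVertices t, ∀ z u, Function.update ν x (some v) z = some u →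
        u ∈ cographVertices t := by
      intro v hv z u h
      rw [Function.update_apply] at h
      split_ifs at h with hz
      · cases h; exact hv
      · exact hν _ _ h
    simp only [TS, tr, Sat, sat_fAnd]
    constructor
    · rintro ⟨v, hv, h⟩
      exact ⟨v, vert_pos t hv, (sat_vert t _ μ x v (by simp) (vert_pos t hv)).2 hv,
        (ih _ _ (hup v hv)).1 h⟩
    · rintro ⟨v, hvp, hv, h⟩
      have hv := (sat_vert t _ μ x v (by simp) hvp).1 hv
      exact ⟨v, hv, (ih _ _ (hup v hv)).2 h⟩
  | exSO X a ih =>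
    simp only [TS, tr, Sat, sat_fAnd]
    constructor
    · rintro ⟨E, hE, h⟩
      refine ⟨E, fun v hv => vert_pos t (hE hv), ?_, (ih _ _ hν).1 h⟩
      rintro ⟨v, hv, ⟨w, hw, hm⟩, h2⟩
      simp at hw hm
      subst hw
      exact h2 ((sat_vert t _ _ 0 v (by simp) hv).2 (hE hm))
    · rintro ⟨E, hE, h1, h⟩
      refine ⟨E, fun v hv => ?_, (ih _ _ hν).2 h⟩
      by_contra hn
      exact h1 ⟨v, hE hv, ⟨v, by simp, by simpa using hv⟩,
        fun h2 => hn ((sat_vert t _ _ 0 v (by simp) (hE hv)).1 h2)⟩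

end CographAux

/-- For every MSO sentence `φ` over `Alph`-labeled undirected
graphs there is an MSO sentence `φ~` over binary trees labeled by
`Alph ∪ {⊕,⊗}` such that for every cograph term `C`, with `G = ⟦C⟧`:
`G ⊨ φ` iff `C ⊨ φ~`. -/
theorem cograph_mso_interpretation (Alph : Type) [Fintype Alph]
    (φ : GMSO Alph Unit) (hφ : GMSO.Closed φ) :
    ∃ ψ : GMSO (CographLabel Alph) Bool, GMSO.Closed ψ ∧
      ∀ t : BTree (CographLabel Alph), IsCographTerm t →
        (cographSat t φ ↔ BTree.TSat t ψ) := by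
  exact ⟨CographAux.tr φ,
    ⟨Set.subset_empty_iff.1 (hφ.1 ▸ CographAux.tr_freeFO φ),
      Set.subset_empty_iff.1 (hφ.2 ▸ CographAux.tr_freeSO φ)⟩,
    fun t ht => CographAux.main t ht φ _ _ (by simp)⟩
end

section
/- For every MSO sentence φ over (Σ,Γ)-labeled graphs and every k > 0, there exists an MSO sentence φ~^k over Λ^k-labeled binary trees such that for every valid k-STT τ with ⟦τ⟧ = (G,χ): G ⊨ φ if and only if τ ⊨ φ~^k. -/
/-! ### Special tree terms (STTs) and their graph semantics -/

/-- Special tree terms over vertex labels `Vl` and edge labels `El`,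
with colors in `ℕ`. -/
inductive STT (Vl El : Type) : Type
  | atom (i : ℕ) (a : Vl)
  | add (γ : El) (i j : ℕ) (τ : STT Vl El)
  | forget (i : ℕ) (τ : STT Vl El)
  | plus (τ₁ τ₂ : STT Vl El)

namespace STT

variable {Vl El : Type}

/-- The active colors of a term. -/
def activeColors : STT Vl El → Set ℕ
  | .atom i _ => {i}
  | .add _ _ _ τ => τ.activeColors
  | .forget i τ => τ.activeColors \ {i}
  | .plus τ₁ τ₂ => τ₁.activeColors ∪ τ₂.activeColors

/-- Valid `k`-STTs: colors in `[k] = {1,…,k}`, and the two arguments of `⊕`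
have disjoint sets of active colors. -/
def Valid (k : ℕ) : STT Vl El → Prop
  | .atom i _ => 1 ≤ i ∧ i ≤ k
  | .add _ i j τ => 1 ≤ i ∧ i ≤ k ∧ 1 ≤ j ∧ j ≤ k ∧ τ.Valid k
  | .forget i τ => 1 ≤ i ∧ i ≤ k ∧ τ.Valid k
  | .plus τ₁ τ₂ => τ₁.Valid k ∧ τ₂.Valid k ∧ Disjoint τ₁.activeColors τ₂.activeColors

/-- The (partial, injective) coloring `χ_τ`, mapping a color to the position of
the vertex currently carrying it.  Vertices are identified with the positions
of the atoms in the term (`false` = unique/left child, `true` = right child). -/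
def chi : STT Vl El → ℕ → Option (List Bool)
  | .atom i _, j => if j = i then some [] else none
  | .add _ _ _ τ, j => (τ.chi j).map (false :: ·)
  | .forget i τ, j => if j = i then none else (τ.chi j).map (false :: ·)
  | .plus τ₁ τ₂, j =>
      match τ₁.chi j with
      | some p => some (false :: p)
      | none => (τ₂.chi j).map (true :: ·)

/-- The label of a vertex (i.e., of an atom position) of `G_τ`. -/
def vlabel : STT Vl El → List Bool → Option Vl
  | .atom _ a, [] => some a
  | .add _ _ _ τ, false :: p => τ.vlabel p
  | .forget _ τ, false :: p => τ.vlabel p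
  | .plus τ₁ _, false :: p => τ₁.vlabel p
  | .plus _ τ₂, true :: p => τ₂.vlabel p
  | _, _ => none

/-- The vertex set of `G_τ`. -/
def vertices (τ : STT Vl El) : Set (List Bool) := {p | (τ.vlabel p).isSome}

/-- The `γ`-labeled edge relation of `G_τ`. -/
def edgeRel : STT Vl El → El → List Bool → List Bool → Prop
  | .atom _ _, _, _, _ => False
  | .add γ' i j τ, γ, u, v =>
      (∃ u' v', u = false :: u' ∧ v = false :: v' ∧ τ.edgeRel γ u' v') ∨
      (γ = γ' ∧ ∃ pu pv, τ.chi i = some pu ∧ τ.chi j = some pv ∧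
        u = false :: pu ∧ v = false :: pv)
  | .forget _ τ, γ, u, v => ∃ u' v', u = false :: u' ∧ v = false :: v' ∧ τ.edgeRel γ u' v'
  | .plus τ₁ τ₂, γ, u, v =>
      (∃ u' v', u = false :: u' ∧ v = false :: v' ∧ τ₁.edgeRel γ u' v') ∨
      (∃ u' v', u = true :: u' ∧ v = true :: v' ∧ τ₂.edgeRel γ u' v')

/-- `G_τ` is acyclic: the union of all edge relations has an irreflexive
transitive closure. -/
def Acyclic (τ : STT Vl El) : Prop :=
  ∀ p, ¬ Relation.TransGen (fun u v => ∃ γ, τ.edgeRel γ u v) p p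

/-- Satisfaction of a graph-MSO sentence in the graph `G_τ`. -/
def graphSat (τ : STT Vl El) (φ : GMSO Vl El) : Prop :=
  GMSO.Models τ.vertices (fun p a => τ.vlabel p = some a) τ.edgeRel φ

end STT

/-- The label alphabet `Λ^k` of `k`-STTs, seen as labeled binary trees. -/
inductive STTLabel (Vl El : Type) : Type
  | atom (i : ℕ) (a : Vl)
  | add (γ : El) (i j : ℕ)
  | forget (i : ℕ)
  | plus

/-- The binary tree underlying a special tree term. -/
def STT.toTree {Vl El : Type} : STT Vl El → BTree (STTLabel Vl El)
  | .atom i a => .leaf (.atom i a)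
  | .add γ i j τ => .unary (.add γ i j) τ.toTree
  | .forget i τ => .unary (.forget i) τ.toTree
  | .plus τ₁ τ₂ => .binary .plus τ₁.toTree τ₂.toTree

namespace SttAux

open GMSO

/-- All proper prefixes of the list satisfy `f`. -/
def NF : (List Bool → Prop) → List Bool → Prop
  | _, [] => True
  | f, b :: r => f [] ∧ NF (fun s => f (b :: s)) r

theorem NF_snoc (r : List Bool) (b : Bool) : ∀ f, NF f (r ++ [b]) ↔ NF f r ∧ f r := by
  induction r with
  | nil => intro f; simp [NF]
  | cons c r ih => intro f; simp [NF, ih, and_assoc]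

theorem labelAt_prefix {Λ : Type} (t : BTree Λ) : ∀ (p q : List Bool),
    (t.labelAt (p ++ q)).isSome → (t.labelAt p).isSome := by
  induction t with
  | leaf l => intro p q; cases p <;> simp [BTree.labelAt]
  | unary l t ih =>
    intro p q
    rcases p with _ | ⟨_ | _, p⟩ <;> simp [BTree.labelAt]
    simpa using ih p q
  | binary l t₁ t₂ ih₁ ih₂ =>
    intro p q
    rcases p with _ | ⟨_ | _, p⟩ <;> simp [BTree.labelAt]
    · simpa using ih₁ p q
    · simpa using ih₂ p q

variable {Vl El : Type}

def Col (t : BTree (STTLabel Vl El)) (i : ℕ) (z u : List Bool) : Prop :=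
  (∃ a, t.labelAt u = some (.atom i a)) ∧
    ∃ r, u = z ++ r ∧ NF (fun s => t.labelAt (z ++ s) ≠ some (.forget i)) r

def Step (t : BTree (STTLabel Vl El)) (i : ℕ) (p q : List Bool) : Prop :=
  t.labelAt p ≠ some (.forget i) ∧ ∃ b, t.childRel b p q

theorem reach_iff (t : BTree (STTLabel Vl El)) (i : ℕ) (z u : List Bool)
    (hu : u ∈ t.positions) :
    Relation.ReflTransGen (Step t i) z u ↔
      ∃ r, u = z ++ r ∧ NF (fun s => t.labelAt (z ++ s) ≠ some (.forget i)) r := by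
  constructor
  · intro h
    clear hu
    induction h with
    | refl => exact ⟨[], by simp, trivial⟩
    | tail _ hs ih =>
      obtain ⟨r, rfl, hr⟩ := ih
      obtain ⟨h1, b, rfl, _⟩ := hs
      exact ⟨r ++ [b], by simp, (NF_snoc _ _ _).2 ⟨hr, h1⟩⟩
  · rintro ⟨r, rfl, hr⟩
    induction r using List.reverseRecOn with
    | nil => simpa using Relation.ReflTransGen.refl
    | append_singleton r b ih =>
      rw [NF_snoc] at hr
      rw [← List.append_assoc] at hu ⊢
      exact (ih hr.1 (labelAt_prefix t _ _ hu)).tail ⟨hr.2, b, rfl, hu⟩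

theorem chi_active (τ : STT Vl El) (i : ℕ) : (τ.chi i).isSome → i ∈ τ.activeColors := by
  induction τ with
  | atom j a => simp [STT.chi, STT.activeColors]
  | add γ j l τ ih => simpa [STT.chi, STT.activeColors] using ih
  | forget j τ ih =>
    by_cases h : i = j <;> simp [STT.chi, STT.activeColors, h]
    simpa using ih
  | plus τ₁ τ₂ ih₁ ih₂ =>
    simp only [STT.chi, STT.activeColors, Set.mem_union]
    cases h : τ₁.chi i with
    | none => intro h2; right; apply ih₂; simpa using h2
    | some p => intro _; left; apply ih₁; simp [h]

theorem col_nil (k : ℕ) (τ : STT Vl El) (i : ℕ) : ∀ u, τ.Valid k →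
    (Col τ.toTree i [] u ↔ τ.chi i = some u) := by
  induction τ with
  | atom j a =>
    intro u _
    rcases u with _ | ⟨b, u⟩ <;> simp [Col, STT.toTree, BTree.labelAt, STT.chi, NF, eq_comm]
  | add γ j l τ ih =>
    intro u hv
    have := fun u => ih u hv.2.2.2.2
    simp only [Col] at this
    rcases u with _ | ⟨_ | _, u⟩ <;> simp [Col, STT.toTree, BTree.labelAt, STT.chi, NF]
    simpa using this u
  | forget j τ ih =>
    intro u hv
    have := fun u => ih u hv.2.2
    simp only [Col] at this
    rcases u with _ | ⟨_ | _, u⟩ <;> simp [Col, STT.toTree, BTree.labelAt, STT.chi, NF]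
    have h := this u
    simp at h
    rw [← h]
    have : j = i ↔ i = j := eq_comm
    tauto
  | plus τ₁ τ₂ ih₁ ih₂ =>
    intro u hv
    have h1 := fun u => ih₁ u hv.1
    have h2 := fun u => ih₂ u hv.2.1
    simp only [Col] at h1 h2
    have hd : (τ₁.chi i).isSome → τ₂.chi i = none := by
      intro h
      by_contra hc
      exact Set.disjoint_left.1 hv.2.2 (chi_active _ _ h)
        (chi_active _ _ (Option.isSome_iff_ne_none.2 hc))
    rcases u with _ | ⟨_ | _, u⟩
    · simp [Col, STT.toTree, BTree.labelAt, STT.chi]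
      cases h : τ₁.chi i <;> simp
    · have := h1 u
      simp at this
      simp [Col, STT.toTree, BTree.labelAt, STT.chi, NF, this]
      cases h : τ₁.chi i <;> simp
    · have := h2 u
      simp at this
      simp [Col, STT.toTree, BTree.labelAt, STT.chi, NF, this]
      cases h : τ₁.chi i <;> simp
      simp [hd, h]

theorem vlabel_iff (k : ℕ) (τ : STT Vl El) (a : Vl) : ∀ u, τ.Valid k →
    (τ.vlabel u = some a ↔ ∃ i < k + 1, τ.toTree.labelAt u = some (.atom i a)) := by
  induction τ with
  | atom j b =>
    intro u hv
    have : j < k + 1 := Nat.lt_succ_of_le hv.2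
    rcases u with _ | ⟨_ | _, u⟩ <;> simp [STT.toTree, BTree.labelAt, STT.vlabel]
    intro _; omega
  | add γ j l τ ih =>
    intro u hv
    have := fun u => ih u hv.2.2.2.2
    rcases u with _ | ⟨_ | _, u⟩ <;> simp [STT.toTree, BTree.labelAt, STT.vlabel, this]
  | forget j τ ih =>
    intro u hv
    have := fun u => ih u hv.2.2
    rcases u with _ | ⟨_ | _, u⟩ <;> simp [STT.toTree, BTree.labelAt, STT.vlabel, this]
  | plus τ₁ τ₂ ih₁ ih₂ =>
    intro u hv
    have h1 := fun u => ih₁ u hv.1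
    have h2 := fun u => ih₂ u hv.2.1
    rcases u with _ | ⟨_ | _, u⟩ <;> simp [STT.toTree, BTree.labelAt, STT.vlabel, h1, h2]

theorem col_cons_unary (l : STTLabel Vl El) (t : BTree (STTLabel Vl El)) (i : ℕ)
    (z u : List Bool) : Col (.unary l t) i (false :: z) u ↔
      ∃ u', u = false :: u' ∧ Col t i z u' := by
  rcases u with _ | ⟨_ | _, u⟩ <;> simp [Col, BTree.labelAt]

theorem col_cons_false (l : STTLabel Vl El) (t t' : BTree (STTLabel Vl El)) (i : ℕ)
    (z u : List Bool) : Col (.binary l t t') i (false :: z) u ↔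
      ∃ u', u = false :: u' ∧ Col t i z u' := by
  rcases u with _ | ⟨_ | _, u⟩ <;> simp [Col, BTree.labelAt]

theorem col_cons_true (l : STTLabel Vl El) (t t' : BTree (STTLabel Vl El)) (i : ℕ)
    (z u : List Bool) : Col (.binary l t t') i (true :: z) u ↔
      ∃ u', u = true :: u' ∧ Col t' i z u' := by
  rcases u with _ | ⟨_ | _, u⟩ <;> simp [Col, BTree.labelAt]

def EdgeT (k : ℕ) (t : BTree (STTLabel Vl El)) (γ : El) (u v : List Bool) : Prop :=
  ∃ z, ∃ i < k + 1, ∃ j < k + 1, t.labelAt z = some (.add γ i j) ∧ Col t i z u ∧ Col t j z v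

theorem edge_iff (k : ℕ) (τ : STT Vl El) (γ : El) : ∀ u v, τ.Valid k →
    (τ.edgeRel γ u v ↔ EdgeT k τ.toTree γ u v) := by
  induction τ with
  | atom j b =>
    intro u v hv
    simp only [STT.edgeRel, EdgeT, STT.toTree, false_iff]
    rintro ⟨z, i, _, j, _, h, _⟩
    rcases z with _ | ⟨_ | _, z⟩ <;> simp [BTree.labelAt] at h
  | add γ' i j τ ih =>
    intro u v hv
    have ih := fun u v => ih u v hv.2.2.2.2
    have hc := fun i u => (col_nil k (.add γ' i j τ) i u)
    simp only [STT.edgeRel]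
    constructor
    · rintro (⟨u', v', rfl, rfl, h⟩ | ⟨rfl, pu, pv, h1, h2, rfl, rfl⟩)
      · obtain ⟨z, i, hi, j, hj, h, h1, h2⟩ := (ih _ _).1 h
        exact ⟨false :: z, i, hi, j, hj, by simpa [STT.toTree, BTree.labelAt] using h,
          (col_cons_unary _ _ _ _ _).2 ⟨_, rfl, h1⟩, (col_cons_unary _ _ _ _ _).2 ⟨_, rfl, h2⟩⟩
      · refine ⟨[], i, Nat.lt_succ_of_le hv.2.1, j, Nat.lt_succ_of_le hv.2.2.2.1,
          by simp [STT.toTree, BTree.labelAt], ?_, ?_⟩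
        · rw [col_nil k _ _ _ hv]; simp [STT.chi, h1]
        · rw [col_nil k _ _ _ hv]; simp [STT.chi, h2]
    · rintro ⟨z, i', hi, j', hj, h, h1, h2⟩
      rcases z with _ | ⟨_ | _, z⟩
      · right
        simp [STT.toTree, BTree.labelAt] at h
        obtain ⟨rfl, rfl, rfl⟩ := h
        rw [col_nil k _ _ _ hv] at h1 h2
        simp [STT.chi] at h1 h2
        obtain ⟨pu, h1, rfl⟩ := h1
        obtain ⟨pv, h2, rfl⟩ := h2
        exact ⟨rfl, pu, pv, h1, h2, rfl, rfl⟩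
      · left
        simp only [STT.toTree] at h1 h2
        obtain ⟨u', rfl, g1⟩ := (col_cons_unary _ _ _ _ _).1 h1
        obtain ⟨v', rfl, g2⟩ := (col_cons_unary _ _ _ _ _).1 h2
        exact ⟨u', v', rfl, rfl, (ih _ _).2 ⟨z, i', hi, j', hj,
          by simpa [STT.toTree, BTree.labelAt] using h, g1, g2⟩⟩
      · simp [STT.toTree, BTree.labelAt] at h
  | forget l τ ih =>
    intro u v hv
    have ih := fun u v => ih u v hv.2.2
    simp only [STT.edgeRel]
    constructor
    · rintro ⟨u', v', rfl, rfl, h⟩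
      obtain ⟨z, i, hi, j, hj, h, h1, h2⟩ := (ih _ _).1 h
      exact ⟨false :: z, i, hi, j, hj, by simpa [STT.toTree, BTree.labelAt] using h,
          (col_cons_unary _ _ _ _ _).2 ⟨_, rfl, h1⟩, (col_cons_unary _ _ _ _ _).2 ⟨_, rfl, h2⟩⟩
    · rintro ⟨z, i', hi, j', hj, h, h1, h2⟩
      rcases z with _ | ⟨_ | _, z⟩
      · simp [STT.toTree, BTree.labelAt] at h
      · simp only [STT.toTree] at h1 h2
        obtain ⟨u', rfl, g1⟩ := (col_cons_unary _ _ _ _ _).1 h1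
        obtain ⟨v', rfl, g2⟩ := (col_cons_unary _ _ _ _ _).1 h2
        exact ⟨u', v', rfl, rfl, (ih _ _).2 ⟨z, i', hi, j', hj,
          by simpa [STT.toTree, BTree.labelAt] using h, g1, g2⟩⟩
      · simp [STT.toTree, BTree.labelAt] at h
  | plus τ₁ τ₂ ih₁ ih₂ =>
    intro u v hv
    have ih₁ := fun u v => ih₁ u v hv.1
    have ih₂ := fun u v => ih₂ u v hv.2.1
    simp only [STT.edgeRel]
    constructor
    · rintro (⟨u', v', rfl, rfl, h⟩ | ⟨u', v', rfl, rfl, h⟩)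
      · obtain ⟨z, i, hi, j, hj, h, h1, h2⟩ := (ih₁ _ _).1 h
        exact ⟨false :: z, i, hi, j, hj, by simpa [STT.toTree, BTree.labelAt] using h,
          (col_cons_false _ _ _ _ _ _).2 ⟨_, rfl, h1⟩,
          (col_cons_false _ _ _ _ _ _).2 ⟨_, rfl, h2⟩⟩
      · obtain ⟨z, i, hi, j, hj, h, h1, h2⟩ := (ih₂ _ _).1 h
        exact ⟨true :: z, i, hi, j, hj, by simpa [STT.toTree, BTree.labelAt] using h,
          (col_cons_true _ _ _ _ _ _).2 ⟨_, rfl, h1⟩,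
          (col_cons_true _ _ _ _ _ _).2 ⟨_, rfl, h2⟩⟩
    · rintro ⟨z, i', hi, j', hj, h, h1, h2⟩
      rcases z with _ | ⟨_ | _, z⟩
      · simp [STT.toTree, BTree.labelAt] at h
      · left
        simp only [STT.toTree] at h1 h2
        obtain ⟨u', rfl, g1⟩ := (col_cons_false _ _ _ _ _ _).1 h1
        obtain ⟨v', rfl, g2⟩ := (col_cons_false _ _ _ _ _ _).1 h2
        exact ⟨u', v', rfl, rfl, (ih₁ _ _).2 ⟨z, i', hi, j', hj,
          by simpa [STT.toTree, BTree.labelAt] using h, g1, g2⟩⟩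
      · right
        simp only [STT.toTree] at h1 h2
        obtain ⟨u', rfl, g1⟩ := (col_cons_true _ _ _ _ _ _).1 h1
        obtain ⟨v', rfl, g2⟩ := (col_cons_true _ _ _ _ _ _).1 h2
        exact ⟨u', v', rfl, rfl, (ih₂ _ _).2 ⟨z, i', hi, j', hj,
          by simpa [STT.toTree, BTree.labelAt] using h, g1, g2⟩⟩

/-! Formula combinators. -/

section comb
variable {L M V : Type}

def fand (φ ψ : GMSO L M) : GMSO L M := .not (.or (.not φ) (.not ψ))

def ffalse : GMSO L M := .exFO 0 (.not (.eq 0 0))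

def bigOr {ι : Type} (f : ι → GMSO L M) : List ι → GMSO L M
  | [] => ffalse
  | i :: l => .or (f i) (bigOr f l)

variable (dom : Set V) (lab : V → L → Prop) (edge : M → V → V → Prop)
  (ν : ℕ → Option V) (μ : ℕ → Set V)

theorem sat_fand (φ ψ : GMSO L M) : Sat dom lab edge ν μ (fand φ ψ) ↔
    Sat dom lab edge ν μ φ ∧ Sat dom lab edge ν μ ψ := by
  simp only [fand, Sat]; tauto

theorem sat_bigOr {ι : Type} (f : ι → GMSO L M) (l : List ι) :
    Sat dom lab edge ν μ (bigOr f l) ↔ ∃ i ∈ l, Sat dom lab edge ν μ (f i) := by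
  induction l with
  | nil => simp [bigOr, ffalse, Sat]
  | cons a l ih => simp [bigOr, Sat, ih]

theorem fo_fand (φ ψ : GMSO L M) : freeFO (fand φ ψ) = freeFO φ ∪ freeFO ψ := rfl
theorem so_fand (φ ψ : GMSO L M) : freeSO (fand φ ψ) = freeSO φ ∪ freeSO ψ := rfl

theorem fo_bigOr {ι : Type} (f : ι → GMSO L M) (l : List ι) (S : Set ℕ)
    (h : ∀ i, freeFO (f i) ⊆ S) : freeFO (bigOr f l) ⊆ S := by
  induction l with
  | nil => simp [bigOr, ffalse, freeFO]
  | cons a l ih => simp [bigOr, freeFO, ih, h]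

theorem so_bigOr {ι : Type} (f : ι → GMSO L M) (l : List ι) (S : Set ℕ)
    (h : ∀ i, freeSO (f i) ⊆ S) : freeSO (bigOr f l) ⊆ S := by
  induction l with
  | nil => simp [bigOr, ffalse, freeSO]
  | cons a l ih => simp [bigOr, freeSO, ih, h]

end comb

noncomputable section

variable [Fintype Vl]

/-- the set variable 0 contains 0, is closed under steps, avoids `x` -/
def sepF (i x : ℕ) : GMSO (STTLabel Vl El) Bool :=
  fand (.mem 0 0) (fand (.not (.mem x 0))
    (.not (.exFO 1 (.exFO 2 (fand (.mem 1 0) (fand (.not (.lab (.forget i) 1))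
      (fand (.or (.edge false 1 2) (.edge true 1 2)) (.not (.mem 2 0)))))))))

def colF (i x : ℕ) : GMSO (STTLabel Vl El) Bool :=
  fand (bigOr (fun a : Vl => .lab (.atom i a) x) Finset.univ.toList)
    (.not (.exSO 0 (sepF i x)))

def edgeF (k : ℕ) (γ : El) (x y : ℕ) : GMSO (STTLabel Vl El) Bool :=
  .exFO 0 (bigOr (fun i => bigOr (fun j =>
    fand (.lab (.add γ i j) 0) (fand (colF i x) (colF j y)))
      (List.range (k + 1))) (List.range (k + 1)))

def labF (k : ℕ) (a : Vl) (x : ℕ) : GMSO (STTLabel Vl El) Bool :=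
  bigOr (fun i => .lab (.atom i a) x) (List.range (k + 1))

def vertF (k : ℕ) (x : ℕ) : GMSO (STTLabel Vl El) Bool :=
  bigOr (fun a : Vl => labF k a x) Finset.univ.toList

def tr (k : ℕ) : GMSO Vl El → GMSO (STTLabel Vl El) Bool
  | .lab a x => labF k a (x + 3)
  | .edge γ x y => edgeF k γ (x + 3) (y + 3)
  | .eq x y => .eq (x + 3) (y + 3)
  | .mem x X => .mem (x + 3) (X + 3)
  | .or φ ψ => .or (tr k φ) (tr k ψ)
  | .not φ => .not (tr k φ)
  | .exFO x φ => .exFO (x + 3) (fand (vertF k (x + 3)) (tr k φ))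
  | .exSO X φ => .exSO (X + 3) (tr k φ)

theorem fo_colF (i x : ℕ) : freeFO (colF i x : GMSO (STTLabel Vl El) Bool) ⊆ {0, x} := by
  have := fo_bigOr (fun a : Vl => (.lab (.atom i a) x : GMSO (STTLabel Vl El) Bool))
    Finset.univ.toList {0, x} (by intro a; simp [freeFO])
  rw [colF, fo_fand]
  refine Set.union_subset this ?_
  simp only [freeFO, sepF, fo_fand]
  intro n
  simp
  omega

theorem so_colF (i x : ℕ) : freeSO (colF i x : GMSO (STTLabel Vl El) Bool) ⊆ ∅ := by
  have := so_bigOr (fun a : Vl => (.lab (.atom i a) x : GMSO (STTLabel Vl El) Bool))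
    Finset.univ.toList ∅ (by intro a; simp [freeSO])
  rw [colF, so_fand]
  refine Set.union_subset this ?_
  simp only [freeSO, sepF, so_fand]
  intro n
  simp

theorem fo_edgeF (k : ℕ) (γ : El) (x y : ℕ) :
    freeFO (edgeF k γ x y : GMSO (STTLabel Vl El) Bool) ⊆ {x, y} := by
  have : freeFO (bigOr (fun i => bigOr (fun j =>
    fand (.lab (.add γ i j) 0) (fand (colF i x) (colF j y)))
      (List.range (k + 1))) (List.range (k + 1)) : GMSO (STTLabel Vl El) Bool) ⊆ {0, x, y} := by
    refine fo_bigOr _ _ _ fun i => fo_bigOr _ _ _ fun j => ?_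
    simp only [fo_fand, freeFO]
    intro n hn
    have h1 := @fo_colF Vl El _ i x n
    have h2 := @fo_colF Vl El _ j y n
    simp at hn h1 h2 ⊢
    tauto
  intro n hn
  have h := @this n hn.1
  have h2 := hn.2
  simp at h h2 ⊢
  tauto

theorem so_edgeF (k : ℕ) (γ : El) (x y : ℕ) :
    freeSO (edgeF k γ x y : GMSO (STTLabel Vl El) Bool) ⊆ ∅ := by
  refine so_bigOr _ _ _ fun i => so_bigOr _ _ _ fun j => ?_
  simp only [so_fand, freeSO]
  exact Set.union_subset (by simp) (Set.union_subset (so_colF _ _) (so_colF _ _))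

theorem fo_labF (k : ℕ) (a : Vl) (x : ℕ) :
    freeFO (labF k a x : GMSO (STTLabel Vl El) Bool) ⊆ {x} :=
  fo_bigOr _ _ _ fun i => by simp [freeFO]

theorem so_labF (k : ℕ) (a : Vl) (x : ℕ) :
    freeSO (labF k a x : GMSO (STTLabel Vl El) Bool) ⊆ ∅ :=
  so_bigOr _ _ _ fun i => by simp [freeSO]

theorem fo_vertF (k : ℕ) (x : ℕ) :
    freeFO (vertF k x : GMSO (STTLabel Vl El) Bool) ⊆ {x} :=
  fo_bigOr _ _ _ fun a => fo_labF _ _ _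

theorem so_vertF (k : ℕ) (x : ℕ) :
    freeSO (vertF k x : GMSO (STTLabel Vl El) Bool) ⊆ ∅ :=
  so_bigOr _ _ _ fun a => so_labF _ _ _

theorem fo_tr (k : ℕ) (φ : GMSO Vl El) :
    freeFO (tr k φ) ⊆ (· + 3) '' freeFO φ := by
  induction φ with
  | lab a x => exact (fo_labF _ _ _).trans (by simp [freeFO])
  | edge γ x y => exact (fo_edgeF _ _ _ _).trans (by simp [freeFO, Set.image_pair])
  | eq x y => simp [tr, freeFO, Set.image_pair]
  | mem x X => simp [tr, freeFO]
  | or φ ψ ih1 ih2 =>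
    simp only [tr, freeFO, Set.image_union]; exact Set.union_subset_union ih1 ih2
  | not φ ih => exact ih
  | exFO x φ ih =>
    simp only [tr, freeFO, fo_fand]
    rintro n ⟨hn | hn, hx⟩
    · exact absurd (fo_vertF _ _ hn) hx
    · obtain ⟨m, hm, rfl⟩ := ih hn
      refine ⟨m, ⟨hm, ?_⟩, rfl⟩
      rintro rfl
      exact hx rfl
  | exSO X φ ih => exact ih

theorem so_tr (k : ℕ) (φ : GMSO Vl El) :
    freeSO (tr k φ) ⊆ (· + 3) '' freeSO φ := by
  induction φ with
  | lab a x => exact (so_labF _ _ _).trans (by simp)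
  | edge γ x y => exact (so_edgeF _ _ _ _).trans (by simp)
  | eq x y => simp [tr, freeSO]
  | mem x X => simp [tr, freeSO]
  | or φ ψ ih1 ih2 =>
    simp only [tr, freeSO, Set.image_union]; exact Set.union_subset_union ih1 ih2
  | not φ ih => exact ih
  | exFO x φ ih =>
    simp only [tr, freeSO, so_fand]
    exact Set.union_subset ((so_vertF _ _).trans (by simp)) ih
  | exSO X φ ih =>
    simp only [tr, freeSO]
    rintro n ⟨hn, hx⟩
    obtain ⟨m, hm, rfl⟩ := ih hn
    refine ⟨m, ⟨hm, ?_⟩, rfl⟩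
    rintro rfl
    exact hx rfl

abbrev TS (t : BTree (STTLabel Vl El)) (ν : ℕ → Option (List Bool)) (μ : ℕ → Set (List Bool))
    (φ : GMSO (STTLabel Vl El) Bool) : Prop :=
  Sat t.positions (fun p l => t.labelAt p = some l) t.childRel ν μ φ

theorem sat_sepF (t : BTree (STTLabel Vl El)) (ν : ℕ → Option (List Bool))
    (μ : ℕ → Set (List Bool)) (i x : ℕ) (z u : List Bool) (h0 : ν 0 = some z)
    (hx : ν x = some u) :
    TS t ν μ (sepF i x) ↔ z ∈ μ 0 ∧ u ∉ μ 0 ∧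
      ∀ p q, p ∈ t.positions → p ∈ μ 0 → Step t i p q → q ∈ μ 0 := by
  simp only [TS, sepF, sat_fand, Sat, h0, hx]
  simp [Function.update]
  intro _ _
  constructor
  · rintro h p q hp hp0 ⟨h1, b, hb⟩
    by_contra hq
    apply hq
    apply h p hp q hb.2 hp0 (fun _ => h1)
    cases b
    · exact Or.inl hb
    · exact Or.inr hb
  · rintro h p hp q hq hp0 h1 hb
    exact h p q hp hp0 ⟨h1 hp, by rcases hb with hb | hb; exacts [⟨_, hb⟩, ⟨_, hb⟩]⟩

theorem sat_colF (t : BTree (STTLabel Vl El)) (ν : ℕ → Option (List Bool))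
    (μ : ℕ → Set (List Bool)) (i x : ℕ) (z u : List Bool) (h0 : ν 0 = some z)
    (hx : ν x = some u) (hz : z ∈ t.positions) (hu : u ∈ t.positions) :
    TS t ν μ (colF i x) ↔ Col t i z u := by
  simp only [TS, colF, sat_fand, sat_bigOr, Col, ← reach_iff t i z u hu]
  apply and_congr
  · simp [Sat, hx, hu]
  · simp only [Sat]
    constructor
    · intro h
      by_contra hc
      apply h
      refine ⟨{q | q ∈ t.positions ∧ Relation.ReflTransGen (Step t i) z q},
        fun q hq => hq.1, (sat_sepF t ν _ i x z u h0 hx).2 ?_⟩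
      simp only [Function.update_self]
      refine ⟨⟨hz, .refl⟩, fun h => hc h.2, ?_⟩
      rintro p q hp ⟨_, hr⟩ hs
      exact ⟨by obtain ⟨_, _, hb⟩ := hs; exact hb.2, hr.tail hs⟩
    · rintro h ⟨E, hE, hs⟩
      obtain ⟨h1, h2, h3⟩ := (sat_sepF t ν _ i x z u h0 hx).1 hs
      simp only [Function.update_self] at h1 h2 h3
      apply h2
      clear hs h2 hx hu
      induction h with
      | refl => exact h1
      | tail _ hs ih => exact h3 _ _ (hE ih) ih hs

theorem sat_edgeF (k : ℕ) (γ : El) (t : BTree (STTLabel Vl El)) (ν : ℕ → Option (List Bool))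
    (μ : ℕ → Set (List Bool)) (x y : ℕ) (u v : List Bool)
    (hx0 : x ≠ 0) (hy0 : y ≠ 0) (hx : ν x = some u) (hy : ν y = some v)
    (hu : u ∈ t.positions) (hv : v ∈ t.positions) :
    TS t ν μ (edgeF k γ x y) ↔ EdgeT k t γ u v := by
  have key : ∀ z ∈ t.positions, ∀ i x u, x ≠ 0 → ν x = some u → u ∈ t.positions →
      (TS t (Function.update ν 0 (some z)) μ (colF i x) ↔ Col t i z u) := by
    intro z hz i x u hx0 hx hu
    exact sat_colF t _ μ i x z u (by simp) (by simp [hx0, hx]) hz hu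
  simp only [TS] at key
  simp only [TS, edgeF, Sat, sat_bigOr, sat_fand, EdgeT, List.mem_range]
  constructor
  · rintro ⟨z, hz, i, hi, j, hj, ⟨z', hz', _, hl⟩, h1, h2⟩
    rw [key z hz i x u hx0 hx hu] at h1
    rw [key z hz j y v hy0 hy hv] at h2
    simp at hz'
    subst hz'
    exact ⟨z, i, hi, j, hj, hl, h1, h2⟩
  · rintro ⟨z, i, hi, j, hj, hl, h1, h2⟩
    have hz : z ∈ t.positions := by simp [BTree.positions, hl]
    exact ⟨z, hz, i, hi, j, hj, ⟨z, by simp, hz, hl⟩,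
      (key z hz i x u hx0 hx hu).2 h1, (key z hz j y v hy0 hy hv).2 h2⟩

theorem edgeF_def (k : ℕ) (γ : El) (t : BTree (STTLabel Vl El)) (ν : ℕ → Option (List Bool))
    (μ : ℕ → Set (List Bool)) (x y : ℕ) (hx0 : x ≠ 0) (hy0 : y ≠ 0)
    (h : TS t ν μ (edgeF k γ x y)) : (ν x).isSome ∧ (ν y).isSome := by
  simp only [TS, edgeF, colF, Sat, sat_bigOr, sat_fand] at h
  obtain ⟨z, _, i, _, j, _, _, ⟨⟨a, _, u, hu, _⟩, _⟩, ⟨b, _, v, hv, _⟩, _⟩ := h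
  rw [Function.update_of_ne hx0] at hu
  rw [Function.update_of_ne hy0] at hv
  simp [hu, hv]

theorem sat_labF (k : ℕ) (τ : STT Vl El) (hτ : τ.Valid k) (ν : ℕ → Option (List Bool))
    (μ : ℕ → Set (List Bool)) (x : ℕ) (a : Vl) :
    TS τ.toTree ν μ (labF k a x) ↔ ∃ u, ν x = some u ∧ τ.vlabel u = some a := by
  simp only [TS, labF, sat_bigOr, Sat, List.mem_range, vlabel_iff k τ a _ hτ]
  constructor
  · rintro ⟨i, hi, u, hu, _, h⟩
    exact ⟨u, hu, i, hi, h⟩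
  · rintro ⟨u, hu, i, hi, h⟩
    exact ⟨i, hi, u, hu, by simp [BTree.positions, h], h⟩

theorem sat_vertF (k : ℕ) (τ : STT Vl El) (hτ : τ.Valid k) (ν : ℕ → Option (List Bool))
    (μ : ℕ → Set (List Bool)) (x : ℕ) :
    TS τ.toTree ν μ (vertF k x) ↔ ∃ u, ν x = some u ∧ u ∈ τ.vertices := by
  have := sat_labF k τ hτ ν μ x
  simp only [TS] at this
  simp only [TS, vertF, sat_bigOr, this, STT.vertices, Set.mem_ofPred_eq,
    Option.isSome_iff_exists]
  simp
  tauto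

theorem vert_pos (k : ℕ) (τ : STT Vl El) (hτ : τ.Valid k) : τ.vertices ⊆ τ.toTree.positions := by
  intro u hu
  obtain ⟨a, ha⟩ := Option.isSome_iff_exists.1 hu
  obtain ⟨i, _, h⟩ := (vlabel_iff k τ a u hτ).1 ha
  simp [BTree.positions, h]

theorem sat_tr (k : ℕ) (τ : STT Vl El) (hτ : τ.Valid k) (φ : GMSO Vl El) :
    ∀ (ν ν' : ℕ → Option (List Bool)) (μ μ' : ℕ → Set (List Bool)),
      (∀ x, ν' (x + 3) = ν x) → (∀ X, μ' (X + 3) ∩ τ.vertices = μ X) →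
      (∀ x u, ν x = some u → u ∈ τ.vertices) →
      (Sat τ.vertices (fun p a => τ.vlabel p = some a) τ.edgeRel ν μ φ ↔
        TS τ.toTree ν' μ' (tr k φ)) := by
  induction φ with
  | lab a x =>
    intro ν ν' μ μ' hν hμ hd
    rw [tr, sat_labF k τ hτ, hν]
    simp only [Sat]
    constructor
    · rintro ⟨u, h, _, h'⟩; exact ⟨u, h, h'⟩
    · rintro ⟨u, h, h'⟩; exact ⟨u, h, hd _ _ h, h'⟩
  | edge γ x y =>
    intro ν ν' μ μ' hν hμ hd
    simp only [Sat, tr]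
    cases hx : ν x with
    | none =>
      refine iff_of_false (by simp) fun h => ?_
      have := (edgeF_def k γ _ ν' μ' _ _ (by simp) (by simp) h).1
      simp [hν, hx] at this
    | some u =>
    cases hy : ν y with
    | none =>
      refine iff_of_false (by simp) fun h => ?_
      have := (edgeF_def k γ _ ν' μ' _ _ (by simp) (by simp) h).2
      simp [hν, hy] at this
    | some v =>
      rw [sat_edgeF k γ _ ν' μ' _ _ u v (by simp) (by simp) ((hν x).trans hx) ((hν y).trans hy)
        (vert_pos k τ hτ (hd _ _ hx)) (vert_pos k τ hτ (hd _ _ hy)), ← edge_iff k τ γ u v hτ]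
      simp
  | eq x y =>
    intro ν ν' μ μ' hν hμ hd
    simp only [Sat, tr, TS, hν]
  | mem x X =>
    intro ν ν' μ μ' hν hμ hd
    simp only [Sat, tr, TS, hν, ← hμ]
    constructor
    · rintro ⟨u, h, h'⟩; exact ⟨u, h, h'.1⟩
    · rintro ⟨u, h, h'⟩; exact ⟨u, h, h', hd _ _ h⟩
  | or φ ψ ih1 ih2 =>
    intro ν ν' μ μ' hν hμ hd
    exact or_congr (ih1 _ _ _ _ hν hμ hd) (ih2 _ _ _ _ hν hμ hd)
  | not φ ih =>
    intro ν ν' μ μ' hν hμ hd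
    exact not_congr (ih _ _ _ _ hν hμ hd)
  | exFO x φ ih =>
    intro ν ν' μ μ' hν hμ hd
    have key : ∀ v ∈ τ.vertices, _ := fun v hv =>
      ih (Function.update ν x (some v)) (Function.update ν' (x + 3) (some v)) μ μ'
        (by intro y; by_cases h : y = x <;> simp [Function.update, h, hν]) hμ
        (by
          intro y u
          by_cases h : y = x <;> simp [Function.update, h]
          · rintro rfl; exact hv
          · exact hd y u)
    have hvf := fun ν' => sat_vertF k τ hτ ν' μ' (x + 3)
    simp only [TS] at key hvf
    simp only [Sat, tr, TS, sat_fand, hvf]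
    constructor
    · rintro ⟨v, hv, h⟩
      exact ⟨v, vert_pos k τ hτ hv, ⟨v, by simp, hv⟩, (key v hv).1 h⟩
    · rintro ⟨v, _, ⟨v', h1, hv⟩, h⟩
      simp at h1
      subst h1
      exact ⟨v, hv, (key v hv).2 h⟩
  | exSO X φ ih =>
    intro ν ν' μ μ' hν hμ hd
    have key : ∀ E E', E' ∩ τ.vertices = E → _ := fun E E' hE =>
      ih ν ν' (Function.update μ X E) (Function.update μ' (X + 3) E') hν
        (by intro Y; by_cases h : Y = X <;> simp [Function.update, h, hμ, hE]) hd
    simp only [Sat, tr, TS]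
    constructor
    · rintro ⟨E, hE, h⟩
      exact ⟨E, hE.trans (vert_pos k τ hτ), (key E E (Set.inter_eq_left.2 hE)).1 h⟩
    · rintro ⟨E, hE, h⟩
      exact ⟨E ∩ τ.vertices, Set.inter_subset_right, (key _ E rfl).2 h⟩

end

end SttAux

/-- For every MSO sentence `φ` over `(Vl, El)`-labeled graphs
and every `k > 0`, there is an MSO sentence `φ~^k` over `Λ^k`-labeled binary
trees such that for every valid `k`-STT `τ` (with `⟦τ⟧ = (G,χ)`):
`G ⊨ φ` iff `τ ⊨ φ~^k`. -/
theorem stt_mso_interpretation (Vl El : Type) [Fintype Vl] [Fintype El]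
    (φ : GMSO Vl El) (hφ : GMSO.Closed φ) (k : ℕ) (hk : 0 < k) :
    ∃ ψ : GMSO (STTLabel Vl El) Bool, GMSO.Closed ψ ∧
      ∀ τ : STT Vl El, τ.Valid k →
        (τ.graphSat φ ↔ BTree.TSat τ.toTree ψ) := by
  refine ⟨SttAux.tr k φ, ⟨?_, ?_⟩, fun τ hτ => ?_⟩
  · have := SttAux.fo_tr k φ
    rw [hφ.1, Set.image_empty] at this
    exact Set.subset_empty_iff.1 this
  · have := SttAux.so_tr k φ
    rw [hφ.2, Set.image_empty] at this
    exact Set.subset_empty_iff.1 this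
  · exact SttAux.sat_tr k τ hτ φ _ _ _ _ (by simp) (by simp) (by simp)
end

section
/- For every k ≥ 1 there is a deterministic bottom-up tree automaton A_acyclic^{k-stw} with at most 2^{k+k²} states that accepts a binary tree τ over Λ^k if and only if τ is a valid k-STT and the graph G_τ is acyclic, i.e., the union of all edge relations of G_τ has an irreflexive transitive closure. -/
/-! ### Bottom-up tree automata -/

/-- A (nondeterministic) bottom-up tree automaton over `Λ`-labeled trees with
nodes of arity 0, 1 or 2. -/
structure BUTA (Λ : Type) where
  State : Type
  stFintype : Fintype State
  leafT : Λ → State → Prop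
  unaryT : Λ → State → State → Prop
  binaryT : Λ → State → State → State → Prop
  accept : State → Prop

namespace BUTA

variable {Λ : Type}

/-- Bottom-up runs: the state assigned at the root of the given tree. -/
inductive Runs (Aut : BUTA Λ) : BTree Λ → Aut.State → Prop
  | leaf {l s} : Aut.leafT l s → Runs Aut (.leaf l) s
  | unary {l t s' s} : Aut.unaryT l s' s → Runs Aut t s' → Runs Aut (.unary l t) s
  | binary {l t₁ t₂ s₁ s₂ s} : Aut.binaryT l s₁ s₂ s →
      Runs Aut t₁ s₁ → Runs Aut t₂ s₂ → Runs Aut (.binary l t₁ t₂) s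

/-- Acceptance: some run reaching an accepting state at the root. -/
def Accepts (Aut : BUTA Λ) (t : BTree Λ) : Prop := ∃ s, Aut.Runs t s ∧ Aut.accept s

/-- Determinism: the transition relations are partial functions. -/
def Deterministic (Aut : BUTA Λ) : Prop :=
  (∀ l s s', Aut.leafT l s → Aut.leafT l s' → s = s') ∧
  (∀ l s₀ s s', Aut.unaryT l s₀ s → Aut.unaryT l s₀ s' → s = s') ∧
  (∀ l s₁ s₂ s s', Aut.binaryT l s₁ s₂ s → Aut.binaryT l s₁ s₂ s' → s = s')

/-- The number of states. -/
noncomputable def card (Aut : BUTA Λ) : ℕ := @Fintype.card Aut.State Aut.stFintype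

end BUTA

namespace STTAux
open Relation

variable {Vl El : Type}

theorem rtg_embed {α β : Type} {f : α → β} (hf : Function.Injective f) {r : β → β → Prop}
    {r' : α → α → Prop} (h : ∀ u w, r (f u) w ↔ ∃ w', w = f w' ∧ r' u w') (u : α) (w : β) :
    ReflTransGen r (f u) w ↔ ∃ w', w = f w' ∧ ReflTransGen r' u w' := by
  constructor
  · intro H
    induction H with
    | refl => exact ⟨u, rfl, .refl⟩
    | tail _ hbc ih =>
      obtain ⟨b', rfl, hb⟩ := ih
      obtain ⟨c', rfl, hc⟩ := (h _ _).1 hbc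
      exact ⟨c', rfl, hb.tail hc⟩
  · rintro ⟨w', rfl, H⟩
    exact ReflTransGen.lift f (fun a b hab => (h _ _).2 ⟨b, rfl, hab⟩) _ _ H

theorem rtg_embed' {α β : Type} {f : α → β} (hf : Function.Injective f) {r : β → β → Prop}
    {r' : α → α → Prop} (h : ∀ u w, r (f u) w ↔ ∃ w', w = f w' ∧ r' u w') (u w : α) :
    ReflTransGen r (f u) (f w) ↔ ReflTransGen r' u w := by
  rw [rtg_embed hf h]
  constructor
  · rintro ⟨w', e, H⟩
    rw [hf e]; exact H
  · intro H; exact ⟨w, rfl, H⟩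

theorem tg_embed {α β : Type} {f : α → β} (hf : Function.Injective f) {r : β → β → Prop}
    {r' : α → α → Prop} (h : ∀ u w, r (f u) w ↔ ∃ w', w = f w' ∧ r' u w') (u w : α) :
    TransGen r (f u) (f w) ↔ TransGen r' u w := by
  rw [TransGen.head'_iff, TransGen.head'_iff]
  constructor
  · rintro ⟨c, hc, H⟩
    obtain ⟨c', rfl, hc'⟩ := (h _ _).1 hc
    exact ⟨c', hc', (rtg_embed' hf h _ _).1 H⟩
  · rintro ⟨c, hc, H⟩
    exact ⟨f c, (h _ _).2 ⟨c, rfl, hc⟩, (rtg_embed' hf h _ _).2 H⟩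

theorem rtg_add {α : Type} (r : α → α → Prop) (P Q : α → Prop) (u v : α) :
    ReflTransGen (fun u v => r u v ∨ (P u ∧ Q v)) u v ↔
      ReflTransGen r u v ∨ ((∃ a, P a ∧ ReflTransGen r u a) ∧ ∃ b, Q b ∧ ReflTransGen r b v) := by
  constructor
  · intro H
    induction H with
    | refl => exact .inl .refl
    | @tail b c _ hbc ih =>
      rcases hbc with hbc | ⟨hP, hQ⟩
      · rcases ih with ih | ⟨h1, b', hb, h2⟩
        · exact .inl (ih.tail hbc)
        · exact .inr ⟨h1, b', hb, h2.tail hbc⟩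
      · rcases ih with ih | ⟨h1, -⟩
        · exact .inr ⟨⟨b, hP, ih⟩, c, hQ, .refl⟩
        · exact .inr ⟨h1, c, hQ, .refl⟩
  · have m : ∀ {x y}, ReflTransGen r x y → ReflTransGen (fun u v => r u v ∨ (P u ∧ Q v)) x y :=
      fun H => ReflTransGen.mono (fun _ _ h => Or.inl h) _ _ H
    rintro (H | ⟨⟨a, ha, h1⟩, b, hb, h2⟩)
    · exact m H
    · exact ((m h1).tail (.inr ⟨ha, hb⟩)).trans (m h2)

theorem acyc_add {α : Type} (r : α → α → Prop) (P Q : α → Prop) :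
    (∀ p, ¬ TransGen (fun u v => r u v ∨ (P u ∧ Q v)) p p) ↔
      (∀ p, ¬ TransGen r p p) ∧ ¬ ∃ b a, Q b ∧ P a ∧ ReflTransGen r b a := by
  constructor
  · intro H
    refine ⟨fun p hp => H p (TransGen.mono (fun _ _ h => Or.inl h) _ _ hp), ?_⟩
    rintro ⟨b, a, hb, ha, h⟩
    refine H a (TransGen.head' (.inr ⟨ha, hb⟩) ?_)
    exact ReflTransGen.mono (fun _ _ h => Or.inl h) _ _ h
  · rintro ⟨H1, H2⟩ p hp
    obtain ⟨c, hc, h⟩ := TransGen.head'_iff.1 hp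
    rw [rtg_add] at h
    rcases hc with hc | ⟨hP, hQ⟩
    · rcases h with h | ⟨⟨a, ha, h1⟩, b, hb, h2⟩
      · exact H1 p (TransGen.head' hc h)
      · exact H2 ⟨b, a, hb, ha, (h2.tail hc).trans h1⟩
    · rcases h with h | ⟨⟨a, ha, h1⟩, b, hb, h2⟩
      · exact H2 ⟨c, p, hQ, hP, h⟩
      · exact H2 ⟨c, a, hQ, ha, h1⟩

/-- Union of the edge relations. -/
def E (τ : STT Vl El) (u v : List Bool) : Prop := ∃ γ, τ.edgeRel γ u v

/-- Connectivity of colors. -/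
def Conn (τ : STT Vl El) (i j : ℕ) : Prop :=
  ∃ p q, τ.chi i = some p ∧ τ.chi j = some q ∧ ReflTransGen (E τ) p q

theorem consInj (b : Bool) : Function.Injective (List.cons b) := fun _ _ h => (List.cons.inj h).2

theorem active_iff (τ : STT Vl El) (i : ℕ) : i ∈ τ.activeColors ↔ ∃ p, τ.chi i = some p := by
  induction τ with
  | atom j a => simp [STT.activeColors, STT.chi]
  | add γ a b τ ih => simp [STT.activeColors, STT.chi, ih]
  | forget j τ ih =>
    by_cases h : i = j <;> simp [STT.activeColors, STT.chi, ih, h]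
  | plus τ₁ τ₂ ih₁ ih₂ =>
    simp only [STT.activeColors, STT.chi, Set.mem_union, ih₁, ih₂]
    cases h : τ₁.chi i <;> simp

theorem active_range {k : ℕ} (τ : STT Vl El) (hv : τ.Valid k) (i : ℕ) (hi : i ∈ τ.activeColors) :
    1 ≤ i ∧ i ≤ k := by
  induction τ with
  | atom j a => simp only [STT.activeColors, Set.mem_singleton_iff] at hi; subst hi; exact hv
  | add γ a b τ ih => exact ih hv.2.2.2.2 hi
  | forget j τ ih => exact ih hv.2.2 hi.1
  | plus τ₁ τ₂ ih₁ ih₂ => exact hi.elim (ih₁ hv.1) (ih₂ hv.2.1)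

theorem conn_self (τ : STT Vl El) (i : ℕ) : Conn τ i i ↔ i ∈ τ.activeColors := by
  rw [active_iff]
  constructor
  · rintro ⟨p, q, h, -⟩; exact ⟨p, h⟩
  · rintro ⟨p, h⟩; exact ⟨p, p, h, h, .refl⟩

theorem acyc_def (τ : STT Vl El) : τ.Acyclic ↔ ∀ p, ¬ TransGen (E τ) p p := Iff.rfl

/-! atom -/
theorem conn_atom (i : ℕ) (a : Vl) (x y : ℕ) :
    Conn (.atom i a : STT Vl El) x y ↔ x = i ∧ y = i := by
  constructor
  · rintro ⟨p, q, h1, h2, -⟩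
    simp only [STT.chi] at h1 h2
    split_ifs at h1 h2
    exact ⟨by assumption, by assumption⟩
  · rintro ⟨rfl, rfl⟩
    exact ⟨[], [], by simp [STT.chi], by simp [STT.chi], .refl⟩

theorem acyc_atom (i : ℕ) (a : Vl) : (.atom i a : STT Vl El).Acyclic := by
  intro p hp
  obtain ⟨c, ⟨γ, hc⟩, h⟩ := TransGen.head'_iff.1 hp
  exact hc

/-! forget -/
theorem E_forget (i : ℕ) (τ : STT Vl El) (u w : List Bool) :
    E (.forget i τ) (false :: u) w ↔ ∃ w', w = false :: w' ∧ E τ u w' := by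
  constructor
  · rintro ⟨γ, u', v', hu, rfl, h⟩
    cases hu
    exact ⟨v', rfl, γ, h⟩
  · rintro ⟨w', rfl, γ, h⟩
    exact ⟨γ, u, w', rfl, rfl, h⟩

theorem conn_forget (i : ℕ) (τ : STT Vl El) (x y : ℕ) :
    Conn (.forget i τ) x y ↔ Conn τ x y ∧ x ≠ i ∧ y ≠ i := by
  constructor
  · rintro ⟨p, q, h1, h2, h⟩
    simp only [STT.chi] at h1 h2
    split_ifs at h1 h2 with e1 e2
    obtain ⟨p, hp, rfl⟩ := Option.map_eq_some_iff.1 h1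
    obtain ⟨q, hq, rfl⟩ := Option.map_eq_some_iff.1 h2
    exact ⟨⟨p, q, hp, hq, (rtg_embed' (consInj false) (E_forget i τ) _ _).1 h⟩, e1, e2⟩
  · rintro ⟨⟨p, q, hp, hq, h⟩, e1, e2⟩
    exact ⟨false :: p, false :: q, by simp [STT.chi, e1, hp], by simp [STT.chi, e2, hq],
      (rtg_embed' (consInj false) (E_forget i τ) _ _).2 h⟩

theorem acyc_forget (i : ℕ) (τ : STT Vl El) : (STT.forget i τ).Acyclic ↔ τ.Acyclic := by
  rw [acyc_def, acyc_def]
  constructor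
  · intro H p hp
    exact H (false :: p) ((tg_embed (consInj false) (E_forget i τ) _ _).2 hp)
  · intro H p hp
    obtain ⟨c, ⟨γ, u', v', rfl, rfl, -⟩, -⟩ := TransGen.head'_iff.1 hp
    exact H _ ((tg_embed (consInj false) (E_forget i τ) _ _).1 hp)

/-! add -/
theorem E_add (γ : El) (i j : ℕ) (τ : STT Vl El) (u w : List Bool) :
    E (.add γ i j τ) (false :: u) w ↔
      ∃ w', w = false :: w' ∧ (E τ u w' ∨ (τ.chi i = some u ∧ τ.chi j = some w')) := by
  constructor
  · rintro ⟨γ', ⟨u', v', hu, rfl, h⟩ | ⟨rfl, pu, pv, h1, h2, hu, rfl⟩⟩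
    · cases hu
      exact ⟨v', rfl, .inl ⟨γ', h⟩⟩
    · cases hu
      exact ⟨pv, rfl, .inr ⟨h1, h2⟩⟩
  · rintro ⟨w', rfl, ⟨γ', h⟩ | ⟨h1, h2⟩⟩
    · exact ⟨γ', .inl ⟨u, w', rfl, rfl, h⟩⟩
    · exact ⟨γ, .inr ⟨rfl, u, w', h1, h2, rfl, rfl⟩⟩

theorem conn_add (γ : El) (i j : ℕ) (τ : STT Vl El) (x y : ℕ) :
    Conn (.add γ i j τ) x y ↔ Conn τ x y ∨ (Conn τ x i ∧ Conn τ j y) := by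
  have key : ∀ p q, ReflTransGen (E (.add γ i j τ)) (false :: p) (false :: q) ↔ _ := fun p q =>
    (rtg_embed' (consInj false) (E_add γ i j τ) p q).trans
      (rtg_add (E τ) (fun u => τ.chi i = some u) (fun u => τ.chi j = some u) p q)
  constructor
  · rintro ⟨p, q, h1, h2, h⟩
    simp only [STT.chi] at h1 h2
    obtain ⟨p, hp, rfl⟩ := Option.map_eq_some_iff.1 h1
    obtain ⟨q, hq, rfl⟩ := Option.map_eq_some_iff.1 h2
    rcases (key _ _).1 h with h | ⟨⟨a, ha, h1⟩, b, hb, h2⟩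
    · exact .inl ⟨p, q, hp, hq, h⟩
    · exact .inr ⟨⟨p, a, hp, ha, h1⟩, ⟨b, q, hb, hq, h2⟩⟩
  · rintro (⟨p, q, hp, hq, h⟩ | ⟨⟨p, a, hp, ha, h1⟩, ⟨b, q, hb, hq, h2⟩⟩)
    · exact ⟨false :: p, false :: q, by simp [STT.chi, hp], by simp [STT.chi, hq],
        (key _ _).2 (.inl h)⟩
    · exact ⟨false :: p, false :: q, by simp [STT.chi, hp], by simp [STT.chi, hq],
        (key _ _).2 (.inr ⟨⟨a, ha, h1⟩, b, hb, h2⟩)⟩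

theorem acyc_add' (γ : El) (i j : ℕ) (τ : STT Vl El) :
    (STT.add γ i j τ).Acyclic ↔ τ.Acyclic ∧ ¬ Conn τ j i := by
  have key := acyc_add (E τ) (fun u => τ.chi i = some u) (fun u => τ.chi j = some u)
  rw [acyc_def, acyc_def]
  refine Iff.trans ?_ key
  constructor
  · intro H p hp
    exact H (false :: p) ((tg_embed (consInj false) (E_add γ i j τ) _ _).2 hp)
  · intro H p hp
    have : ∃ p', p = false :: p' := by
      obtain ⟨c, ⟨γ', ⟨u', v', rfl, rfl, h⟩ | ⟨rfl, pu, pv, h1, h2, rfl, rfl⟩⟩, -⟩ :=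
        TransGen.head'_iff.1 hp
      · exact ⟨_, rfl⟩
      · exact ⟨_, rfl⟩
    obtain ⟨p, rfl⟩ := this
    exact H _ ((tg_embed (consInj false) (E_add γ i j τ) _ _).1 hp)

/-! plus -/
theorem E_plus1 (τ₁ τ₂ : STT Vl El) (u w : List Bool) :
    E (.plus τ₁ τ₂) (false :: u) w ↔ ∃ w', w = false :: w' ∧ E τ₁ u w' := by
  constructor
  · rintro ⟨γ, ⟨u', v', hu, rfl, h⟩ | ⟨u', v', hu, rfl, h⟩⟩
    · cases hu
      exact ⟨v', rfl, γ, h⟩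
    · cases hu
  · rintro ⟨w', rfl, γ, h⟩
    exact ⟨γ, .inl ⟨u, w', rfl, rfl, h⟩⟩

theorem E_plus2 (τ₁ τ₂ : STT Vl El) (u w : List Bool) :
    E (.plus τ₁ τ₂) (true :: u) w ↔ ∃ w', w = true :: w' ∧ E τ₂ u w' := by
  constructor
  · rintro ⟨γ, ⟨u', v', hu, rfl, h⟩ | ⟨u', v', hu, rfl, h⟩⟩
    · cases hu
    · cases hu
      exact ⟨v', rfl, γ, h⟩
  · rintro ⟨w', rfl, γ, h⟩
    exact ⟨γ, .inr ⟨u, w', rfl, rfl, h⟩⟩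

theorem chi_plus (τ₁ τ₂ : STT Vl El) (hd : Disjoint τ₁.activeColors τ₂.activeColors)
    (i : ℕ) (q : List Bool) : (STT.plus τ₁ τ₂).chi i = some q ↔
      (∃ p, τ₁.chi i = some p ∧ q = false :: p) ∨ (∃ p, τ₂.chi i = some p ∧ q = true :: p) := by
  have hd' : i ∈ τ₁.activeColors → i ∉ τ₂.activeColors := fun h => Set.disjoint_left.1 hd h
  rw [active_iff, active_iff] at hd'
  simp only [STT.chi]
  cases h1 : τ₁.chi i with
  | none => simp [eq_comm]
  | some p =>
    have : ∀ x, τ₂.chi i ≠ some x := fun x hx => hd' ⟨p, h1⟩ ⟨x, hx⟩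
    simp [this, eq_comm]

theorem conn_plus (τ₁ τ₂ : STT Vl El) (hd : Disjoint τ₁.activeColors τ₂.activeColors) (x y : ℕ) :
    Conn (.plus τ₁ τ₂) x y ↔ Conn τ₁ x y ∨ Conn τ₂ x y := by
  constructor
  · rintro ⟨p, q, h1, h2, h⟩
    rw [chi_plus _ _ hd] at h1 h2
    rcases h1 with ⟨p, hp, rfl⟩ | ⟨p, hp, rfl⟩
    · obtain ⟨w, rfl, h'⟩ := (rtg_embed (consInj false) (E_plus1 τ₁ τ₂) _ _).1 h
      rcases h2 with ⟨q, hq, e⟩ | ⟨q, hq, e⟩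
      · cases e; exact .inl ⟨_, _, hp, hq, h'⟩
      · cases e
    · obtain ⟨w, rfl, h'⟩ := (rtg_embed (consInj true) (E_plus2 τ₁ τ₂) _ _).1 h
      rcases h2 with ⟨q, hq, e⟩ | ⟨q, hq, e⟩
      · cases e
      · cases e; exact .inr ⟨_, _, hp, hq, h'⟩
  · rintro (⟨p, q, hp, hq, h⟩ | ⟨p, q, hp, hq, h⟩)
    · exact ⟨false :: p, false :: q, (chi_plus _ _ hd _ _).2 (.inl ⟨p, hp, rfl⟩),
        (chi_plus _ _ hd _ _).2 (.inl ⟨q, hq, rfl⟩),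
        (rtg_embed' (consInj false) (E_plus1 τ₁ τ₂) _ _).2 h⟩
    · exact ⟨true :: p, true :: q, (chi_plus _ _ hd _ _).2 (.inr ⟨p, hp, rfl⟩),
        (chi_plus _ _ hd _ _).2 (.inr ⟨q, hq, rfl⟩),
        (rtg_embed' (consInj true) (E_plus2 τ₁ τ₂) _ _).2 h⟩

theorem acyc_plus (τ₁ τ₂ : STT Vl El) :
    (STT.plus τ₁ τ₂).Acyclic ↔ τ₁.Acyclic ∧ τ₂.Acyclic := by
  simp only [acyc_def]
  constructor
  · intro H
    exact ⟨fun p hp => H _ ((tg_embed (consInj false) (E_plus1 τ₁ τ₂) _ _).2 hp),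
      fun p hp => H _ ((tg_embed (consInj true) (E_plus2 τ₁ τ₂) _ _).2 hp)⟩
  · rintro ⟨H1, H2⟩ p hp
    match p, hp with
    | [], hp =>
      obtain ⟨c, ⟨γ', ⟨u', v', h, -⟩ | ⟨u', v', h, -⟩⟩, -⟩ := TransGen.head'_iff.1 hp
      · cases h
      · cases h
    | false :: p, hp => exact H1 _ ((tg_embed (consInj false) (E_plus1 τ₁ τ₂) _ _).1 hp)
    | true :: p, hp => exact H2 _ ((tg_embed (consInj true) (E_plus2 τ₁ τ₂) _ _).1 hp)

/-! automaton -/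
/-- The state of a term. -/
def abs (k : ℕ) (τ : STT Vl El) : Set (Fin k × Fin k) :=
  {x | Conn τ (x.1 + 1) (x.2 + 1)}

theorem mem_abs {k : ℕ} (τ : STT Vl El) (x : Fin k × Fin k) :
    x ∈ abs k τ ↔ Conn τ (x.1 + 1) (x.2 + 1) := Iff.rfl

theorem disj_iff {k : ℕ} (τ₁ τ₂ : STT Vl El) (hv : τ₁.Valid k) :
    Disjoint τ₁.activeColors τ₂.activeColors ↔
      ∀ c : Fin k, ¬ ((c, c) ∈ abs k τ₁ ∧ (c, c) ∈ abs k τ₂) := by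
  simp only [mem_abs, conn_self, Set.disjoint_left]
  constructor
  · intro H c hc; exact H hc.1 hc.2
  · intro H i h1 h2
    obtain ⟨a, b⟩ := active_range τ₁ hv i h1
    have e : i - 1 + 1 = i := by omega
    refine H ⟨i - 1, by omega⟩ ?_
    simp only [e]
    exact ⟨h1, h2⟩

/-- Leaf transitions. -/
def leafT (k : ℕ) : STTLabel Vl El → Set (Fin k × Fin k) → Prop
  | .atom i _, s => (1 ≤ i ∧ i ≤ k) ∧ s = {x | x.1 + 1 = i ∧ x.2 + 1 = i}
  | _, _ => False

/-- Unary transitions. -/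
def unaryT (k : ℕ) : STTLabel Vl El → Set (Fin k × Fin k) → Set (Fin k × Fin k) → Prop
  | .add _ i j, s, s' => ∃ c d : Fin k, i = c + 1 ∧ j = d + 1 ∧ (d, c) ∉ s ∧
      s' = {x | x ∈ s ∨ ((x.1, c) ∈ s ∧ (d, x.2) ∈ s)}
  | .forget i, s, s' => (1 ≤ i ∧ i ≤ k) ∧
      s' = {x | x ∈ s ∧ x.1.val + 1 ≠ i ∧ x.2.val + 1 ≠ i}
  | _, _, _ => False

/-- Binary transitions. -/
def binaryT (k : ℕ) : STTLabel Vl El → Set (Fin k × Fin k) → Set (Fin k × Fin k) →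
    Set (Fin k × Fin k) → Prop
  | .plus, s₁, s₂, s' => (∀ c, ¬ ((c, c) ∈ s₁ ∧ (c, c) ∈ s₂)) ∧ s' = s₁ ∪ s₂
  | _, _, _, _ => False

/-- The automaton. -/
noncomputable def aut (Vl El : Type) (k : ℕ) : BUTA (STTLabel Vl El) where
  State := Set (Fin k × Fin k)
  stFintype := Fintype.ofFinite _
  leafT := leafT k
  unaryT := unaryT k
  binaryT := binaryT k
  accept := fun _ => True

theorem aut_det (k : ℕ) : (aut Vl El k).Deterministic := by
  refine ⟨?_, ?_, ?_⟩
  · intro l s s' h h'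
    cases l with
    | atom i a => exact h.2.trans h'.2.symm
    | _ => exact h.elim
  · intro l s₀ s s' h h'
    cases l with
    | add γ i j =>
      obtain ⟨c, d, e1, e2, -, rfl⟩ := h
      obtain ⟨c', d', e1', e2', -, rfl⟩ := h'
      obtain rfl : c = c' := by ext; omega
      obtain rfl : d = d' := by ext; omega
      rfl
    | forget i => exact h.2.trans h'.2.symm
    | _ => exact h.elim
  · intro l s₁ s₂ s s' h h'
    cases l with
    | plus => exact h.2.trans h'.2.symm
    | _ => exact h.elim

theorem aut_card (k : ℕ) : (aut Vl El k).card ≤ 2 ^ (k + k ^ 2) := by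
  have : (aut Vl El k).card = 2 ^ (k * k) := by
    unfold BUTA.card
    rw [← @Nat.card_eq_fintype_card _ (aut Vl El k).stFintype]
    change Nat.card (Set (Fin k × Fin k)) = _
    simp
  rw [this]
  exact Nat.pow_le_pow_right (by norm_num) (by nlinarith)

theorem abs_atom (k i : ℕ) (a : Vl) :
    abs k (.atom i a : STT Vl El) = {x | x.1 + 1 = i ∧ x.2 + 1 = i} := by
  ext x; rw [mem_abs, conn_atom]; rfl

theorem abs_add (k : ℕ) (γ : El) (c d : Fin k) (τ : STT Vl El) :
    abs k (.add γ (c + 1) (d + 1) τ) =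
      {x | x ∈ abs k τ ∨ ((x.1, c) ∈ abs k τ ∧ (d, x.2) ∈ abs k τ)} := by
  ext x; rw [mem_abs, conn_add]; rfl

theorem abs_forget (k i : ℕ) (τ : STT Vl El) :
    abs k (.forget i τ) = {x | x ∈ abs k τ ∧ x.1.val + 1 ≠ i ∧ x.2.val + 1 ≠ i} := by
  ext x; rw [mem_abs, conn_forget]; rfl

theorem abs_plus (k : ℕ) (τ₁ τ₂ : STT Vl El) (hd : Disjoint τ₁.activeColors τ₂.activeColors) :
    abs k (.plus τ₁ τ₂) = abs k τ₁ ∪ abs k τ₂ := by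
  ext x; rw [mem_abs, conn_plus _ _ hd]; rfl

theorem runs_of (k : ℕ) (τ : STT Vl El) (hv : τ.Valid k) (ha : τ.Acyclic) :
    (aut Vl El k).Runs τ.toTree (abs k τ) := by
  induction τ with
  | atom i a => exact .leaf ⟨hv, abs_atom k i a⟩
  | add γ i j τ ih =>
    obtain ⟨h1, h2, h3, h4, hv⟩ := hv
    obtain ⟨ha', hc⟩ := (acyc_add' _ _ _ _).1 ha
    obtain ⟨c, rfl⟩ : ∃ c : Fin k, i = c + 1 := ⟨⟨i - 1, by omega⟩, by simp; omega⟩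
    obtain ⟨d, rfl⟩ : ∃ c : Fin k, j = c + 1 := ⟨⟨j - 1, by omega⟩, by simp; omega⟩
    exact .unary ⟨c, d, rfl, rfl, hc, abs_add k γ c d τ⟩ (ih hv ha')
  | forget i τ ih =>
    exact .unary ⟨⟨hv.1, hv.2.1⟩, abs_forget k i τ⟩ (ih hv.2.2 ((acyc_forget _ _).1 ha))
  | plus τ₁ τ₂ ih₁ ih₂ =>
    obtain ⟨h1, h2, hd⟩ := hv
    obtain ⟨a1, a2⟩ := (acyc_plus _ _).1 ha
    exact .binary ⟨(disj_iff _ _ h1).1 hd, abs_plus k _ _ hd⟩ (ih₁ h1 a1) (ih₂ h2 a2)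

theorem of_runs (k : ℕ) (t : BTree (STTLabel Vl El)) (s : (aut Vl El k).State)
    (h : (aut Vl El k).Runs t s) :
    ∃ τ : STT Vl El, τ.Valid k ∧ t = τ.toTree ∧ τ.Acyclic ∧ s = abs k τ := by
  induction h with
  | @leaf l s h =>
    cases l with
    | atom i a => exact ⟨.atom i a, h.1, rfl, acyc_atom i a, h.2.trans (abs_atom k i a).symm⟩
    | _ => exact h.elim
  | @unary l t s' s h _ ih =>
    obtain ⟨τ, hv, rfl, ha, rfl⟩ := ih
    cases l with
    | add γ i j =>
      obtain ⟨c, d, rfl, rfl, hc, e⟩ := h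
      refine ⟨.add γ (c + 1) (d + 1) τ, ⟨?_, ?_, ?_, ?_, hv⟩, rfl, (acyc_add' _ _ _ _).2 ⟨ha, hc⟩,
        e.trans (abs_add k γ c d τ).symm⟩ <;> omega
    | forget i =>
      exact ⟨.forget i τ, ⟨h.1.1, h.1.2, hv⟩, rfl, (acyc_forget _ _).2 ha,
        h.2.trans (abs_forget k i τ).symm⟩
    | _ => exact h.elim
  | @binary l t₁ t₂ s₁ s₂ s h _ _ ih₁ ih₂ =>
    obtain ⟨τ₁, hv₁, rfl, ha₁, rfl⟩ := ih₁
    obtain ⟨τ₂, hv₂, rfl, ha₂, rfl⟩ := ih₂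
    cases l with
    | plus =>
      have hd := (disj_iff _ _ hv₁).2 h.1
      exact ⟨.plus τ₁ τ₂, ⟨hv₁, hv₂, hd⟩, rfl, (acyc_plus _ _).2 ⟨ha₁, ha₂⟩,
        h.2.trans (abs_plus k _ _ hd).symm⟩
    | _ => exact h.elim

end STTAux

/-- For every `k ≥ 1` there is a deterministic bottom-up tree
automaton with at most `2^(k+k²)` states accepting a binary tree over `Λ^k` iff
it is a valid `k`-STT whose graph `G_τ` is acyclic. -/
theorem stt_acyclicity_automaton (Vl El : Type) [Fintype Vl] [Fintype El]
    (k : ℕ) (hk : 1 ≤ k) :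
    ∃ Aut : BUTA (STTLabel Vl El), Aut.Deterministic ∧
      Aut.card ≤ 2 ^ (k + k ^ 2) ∧
      ∀ t : BTree (STTLabel Vl El),
        (Aut.Accepts t ↔ ∃ τ : STT Vl El, τ.Valid k ∧ t = τ.toTree ∧ τ.Acyclic) := by
  refine ⟨STTAux.aut Vl El k, STTAux.aut_det k, STTAux.aut_card k, fun t => ⟨?_, ?_⟩⟩
  · rintro ⟨s, h, -⟩
    obtain ⟨τ, h1, h2, h3, -⟩ := STTAux.of_runs k t s h
    exact ⟨τ, h1, h2, h3⟩
  · rintro ⟨τ, h1, rfl, h3⟩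
    exact ⟨_, STTAux.runs_of k τ h1 h3, trivial⟩
end
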